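/- arXiv:2602.04424 — 13 statements merged into one kernel-verified Lean document; each statement's English description precedes it below -/
import Mathlib

section
/- Let (x,y) ∈ ρ_B(T) and let w ∈ dom(T). Then T(R_{x,y}w) = R_{x,y}(Tw) if and only if there exists v ∈ dom(T³) ∩ B with Tv ∈ B such that w = Q_{x,y}v. -/
/-- `dom (T²)`: the elements of the domain `D` of `T` whose image lies again in `D`. -/
def dom2 {V : Type*} (T : V → V) (D : Set V) : Set V := {u | u ∈ D ∧ T u ∈ D}

/-- `dom (T³)`. -/
def dom3 {V : Type*} (T : V → V) (D : Set V) : Set V := {u | u ∈ dom2 T D ∧ T u ∈ dom2 T D}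

/-- `dom_B (T²) = dom(T²) ∩ B`. -/
def domB2 {V : Type*} (T : V → V) (D Bc : Set V) : Set V := dom2 T D ∩ Bc

/-- The operator `Q_{x,y} u = T²u − 2x Tu + (x² + y²) u`. -/
noncomputable def Qop {V : Type*} [AddCommGroup V] [Module ℝ V]
    (T : V → V) (x y : ℝ) (u : V) : V :=
  T (T u) - (2 * x) • T u + (x ^ 2 + y ^ 2) • u

/-- `R` is a bounded (everywhere-defined) operator which is a two-sided inverse
of `Q_{x,y} : dom_B(T²) → V`; in particular `Q_{x,y}` is bijective from `dom_B(T²)` onto `V`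
with bounded inverse `R`. -/
def IsInv {V : Type*} [NormedAddCommGroup V] [NormedSpace ℝ V]
    (T : V → V) (D Bc : Set V) (x y : ℝ) (R : V →L[ℝ] V) : Prop :=
  (∀ v : V, R v ∈ domB2 T D Bc) ∧ (∀ v : V, Qop T x y (R v) = v) ∧
    (∀ u ∈ domB2 T D Bc, R (Qop T x y u) = u)

/-- The resolvent set `ρ_B(T) ⊆ ℝ²`. -/
def rhoB {V : Type*} [NormedAddCommGroup V] [NormedSpace ℝ V]
    (T : V → V) (D Bc : Set V) : Set (ℝ × ℝ) :=
  {p | ∃ R : V →L[ℝ] V, IsInv T D Bc p.1 p.2 R}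

theorem semiconj_inverse_apply_iff {α β : Type*} {s : Set α} {q : α → β} {r : β → α}
    (hmaps : Set.MapsTo r Set.univ s) (hinv : Set.InvOn r q s Set.univ)
    {f : α → α} {g : β → β} (hfg : ∀ v ∈ s, f v ∈ s → g (q v) = q (f v)) (w : β) :
    f (r w) = r (g w) ↔ ∃ v, (v ∈ s ∧ f v ∈ s) ∧ w = q v := by
  constructor
  · intro h
    have hfr : f (r w) ∈ s := h ▸ hmaps (Set.mem_univ (g w))
    exact ⟨r w, ⟨hmaps (Set.mem_univ w), hfr⟩, (hinv.2 (Set.mem_univ w)).symm⟩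
  · rintro ⟨v, ⟨hv, hfv⟩, rfl⟩
    calc f (r (q v)) = f v := by rw [hinv.1 hv]
      _ = r (q (f v)) := (hinv.1 hfv).symm
      _ = r (g (q v)) := by rw [hfg v hv hfv]

theorem mem_domB2_and_map_mem_domB2_iff {V : Type*} {T : V → V} {D Bc : Set V} {v : V} :
    v ∈ domB2 T D Bc ∧ T v ∈ domB2 T D Bc ↔ v ∈ dom3 T D ∧ v ∈ Bc ∧ T v ∈ Bc :=
  and_and_and_comm

section Module

variable {V : Type*} [AddCommGroup V] [Module ℝ V] {T : V → V} {D : Submodule ℝ V}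

theorem Qop_mem_of_mem_dom3 (x y : ℝ) {v : V} (hv : v ∈ dom3 T (D : Set V)) :
    Qop T x y v ∈ D := by
  obtain ⟨⟨hv, hTv⟩, -, hTTv⟩ := hv
  exact D.add_mem (D.sub_mem hTTv (D.smul_mem _ hTv)) (D.smul_mem _ hv)

theorem map_Qop_of_mem_dom3 (hTadd : ∀ u ∈ D, ∀ v ∈ D, T (u + v) = T u + T v)
    (hTsmul : ∀ (c : ℝ), ∀ u ∈ D, T (c • u) = c • T u)
    (x y : ℝ) {v : V} (hv : v ∈ dom3 T (D : Set V)) :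
    T (Qop T x y v) = Qop T x y (T v) := by
  obtain ⟨⟨hv, hTv⟩, -, hTTv⟩ := hv
  have hsmul : (-(2 * x)) • T v ∈ D := D.smul_mem _ hTv
  simp only [Qop, sub_eq_add_neg, ← neg_smul]
  rw [hTadd _ (D.add_mem hTTv hsmul) _ (D.smul_mem _ hv), hTadd _ hTTv _ hsmul,
    hTsmul _ _ hTv, hTsmul _ _ hv]

/-- Commuting at `w` is read as including `w ∈ D`, since `T w` is a junk value off `D`. -/
theorem stmt0_general (hTadd : ∀ u ∈ D, ∀ v ∈ D, T (u + v) = T u + T v)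
    (hTsmul : ∀ (c : ℝ), ∀ u ∈ D, T (c • u) = c • T u) {Bc : Set V} {x y : ℝ} {R : V → V}
    (hmaps : Set.MapsTo R Set.univ (domB2 T (D : Set V) Bc))
    (hinv : Set.InvOn R (Qop T x y) (domB2 T (D : Set V) Bc) Set.univ) (w : V) :
    (w ∈ D ∧ T (R w) = R (T w)) ↔
      ∃ v, v ∈ dom3 T (D : Set V) ∧ v ∈ Bc ∧ T v ∈ Bc ∧ w = Qop T x y v := by
  have hcomm : ∀ v ∈ domB2 T (D : Set V) Bc, T v ∈ domB2 T (D : Set V) Bc →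
      T (Qop T x y v) = Qop T x y (T v) := fun _ hv hTv ↦
    map_Qop_of_mem_dom3 hTadd hTsmul x y (mem_domB2_and_map_mem_domB2_iff.1 ⟨hv, hTv⟩).1
  simp only [semiconj_inverse_apply_iff hmaps hinv hcomm, mem_domB2_and_map_mem_domB2_iff,
    and_assoc]
  refine and_iff_right_of_imp ?_
  rintro ⟨v, hv, -, -, rfl⟩
  exact Qop_mem_of_mem_dom3 x y hv

end Module

section IsInv

variable {V : Type*} [NormedAddCommGroup V] [NormedSpace ℝ V] {T : V → V} {D Bc : Set V}
  {x y : ℝ} {R : V →L[ℝ] V}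

theorem IsInv.mapsTo (hR : IsInv T D Bc x y R) : Set.MapsTo R Set.univ (domB2 T D Bc) :=
  fun v _ ↦ hR.1 v

theorem IsInv.invOn (hR : IsInv T D Bc x y R) :
    Set.InvOn R (Qop T x y) (domB2 T D Bc) Set.univ :=
  ⟨hR.2.2, fun v _ ↦ hR.2.1 v⟩

end IsInv

/-- for `(x,y) ∈ ρ_B(T)` with pseudo-resolvent `R = R_{x,y}` and `w ∈ dom(T)`,
`T` and `R_{x,y}` commute at `w` iff `w = Q_{x,y} v` for some `v ∈ dom(T³) ∩ B` with `Tv ∈ B`. -/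
theorem stmt0 {V : Type*} [NormedAddCommGroup V] [NormedSpace ℝ V] [CompleteSpace V]
    (T : V → V) (D Bc : Submodule ℝ V) (hBD : (Bc : Set V) ⊆ (D : Set V))
    (hTadd : ∀ u ∈ D, ∀ v ∈ D, T (u + v) = T u + T v)
    (hTsmul : ∀ (c : ℝ), ∀ u ∈ D, T (c • u) = c • T u)
    (hTclosed : IsClosed {p : V × V | p.1 ∈ D ∧ p.2 = T p.1})
    (x y : ℝ) (R : V →L[ℝ] V) (hR : IsInv T (D : Set V) (Bc : Set V) x y R)
    (w : V) (hw : w ∈ D) :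
    T (R w) = R (T w) ↔
      ∃ v, v ∈ dom3 T (D : Set V) ∧ v ∈ Bc ∧ T v ∈ Bc ∧ w = Qop T x y v :=
  (and_iff_right hw).symm.trans (stmt0_general hTadd hTsmul hR.mapsTo hR.invOn w)
end

section
/- Let (a,b) ∈ ρ_B(T) and let 0 < ε < 1/(‖T∘R_{a,b}‖ + ‖R_{a,b}‖). For (x,y) ∈ ℝ² define the operator Λ_{x,y} : dom(T) → V by Λ_{x,y}u := 2(x−a)·Tu + ((a²+b²) − (x²+y²))·u. Then for every (x,y) ∈ ℝ² with max{2|x−a|, |(x²+y²)−(a²+b²)|} ≤ ε one has: ‖Λ_{x,y}∘R_{a,b}‖ ≤ ε(‖T∘R_{a,b}‖ + ‖R_{a,b}‖) < 1, the pair (x,y) belongs to ρ_B(T), and R_{x,y} = Σ_{n=0}^∞ R_{a,b}∘(Λ_{x,y}∘R_{a,b})ⁿ, where the series converges in operator norm, uniformly for (x,y) in this set. -/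
/-- The operator `Λ_{x,y} ∘ R_{a,b}`, where `Λ_{x,y}u = 2(x−a)Tu + ((a²+b²)−(x²+y²))u` and
`TR = T ∘ R_{a,b}`, `R = R_{a,b}`. -/
noncomputable def LamR {V : Type*} [NormedAddCommGroup V] [NormedSpace ℝ V]
    (TR R : V →L[ℝ] V) (a b : ℝ) (p : ℝ × ℝ) : V →L[ℝ] V :=
  (2 * (p.1 - a)) • TR + ((a ^ 2 + b ^ 2) - (p.1 ^ 2 + p.2 ^ 2)) • R

/-!
The algebraic identity `Q_{x,y} = Q_{a,b} - Λ_{x,y}` composed with `R_{a,b}` reads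
`Q_{x,y} R_{a,b} = 1 - Λ_{x,y} R_{a,b}`. Since `R_{a,b}` maps `V` bijectively onto `dom_B(T²)`, the
operator `Q_{x,y}` is boundedly invertible on `dom_B(T²)` as soon as the bounded operator
`1 - Λ_{x,y} R_{a,b}` is invertible on `V`, and the Neumann series of the latter gives `R_{x,y}`.
The norm of `Λ_{x,y} R_{a,b}` is bounded uniformly in `(x, y)`, so the series is dominated by a
single geometric series.
-/

theorem norm_mul_pow_le_of_norm_le {A : Type*} [SeminormedRing A] (c : A) {x : A} {r : ℝ}
    (hx : ‖x‖ ≤ r) (n : ℕ) : ‖c * x ^ n‖ ≤ ‖c‖ * r ^ n := by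
  have hr : 0 ≤ r := (norm_nonneg x).trans hx
  induction n with
  | zero => simp only [pow_zero, mul_one, le_refl]
  | succ n ih =>
    calc ‖c * x ^ (n + 1)‖ = ‖c * x ^ n * x‖ := by rw [pow_succ, mul_assoc]
      _ ≤ ‖c * x ^ n‖ * ‖x‖ := norm_mul_le _ _
      _ ≤ ‖c‖ * r ^ n * r := by gcongr
      _ = ‖c‖ * r ^ (n + 1) := by rw [pow_succ, mul_assoc]

theorem tendstoUniformlyOn_tsum_mul_pow {A ι : Type*} [NormedRing A] [CompleteSpace A]
    (c : A) {f : ι → A} {s : Set ι} {r : ℝ} (hr : r < 1) (hf : ∀ i ∈ s, ‖f i‖ ≤ r) :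
    TendstoUniformlyOn (fun (N : ℕ) i => ∑ n ∈ Finset.range N, c * f i ^ n)
      (fun i => ∑' n : ℕ, c * f i ^ n) Filter.atTop s := by
  obtain rfl | ⟨i, hi⟩ := s.eq_empty_or_nonempty
  · exact tendstoUniformlyOn_empty
  · have hr₀ : 0 ≤ r := (norm_nonneg _).trans (hf i hi)
    exact tendstoUniformlyOn_tsum_nat ((summable_geometric_of_lt_one hr₀ hr).mul_left ‖c‖)
      fun n j hj => norm_mul_pow_le_of_norm_le c (hf j hj) n

section

/-- The operator `Λ_{x,y} u = 2(x - a) Tu + ((a² + b²) - (x² + y²)) u`, where `p = (x, y)`: the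
perturbation that turns `Q_{a,b}` into `Q_{x,y}`. Like `Qop`, it is defined on all of `V` and is
meaningful only on `dom T`. -/
def Lamop {V : Type*} [AddCommGroup V] [Module ℝ V] (T : V → V) (a b : ℝ) (p : ℝ × ℝ) (u : V) :
    V :=
  (2 * (p.1 - a)) • T u + ((a ^ 2 + b ^ 2) - (p.1 ^ 2 + p.2 ^ 2)) • u

theorem Qop_eq_Qop_sub_Lamop {V : Type*} [AddCommGroup V] [Module ℝ V] (T : V → V) (a b : ℝ)
    (p : ℝ × ℝ) (u : V) : Qop T p.1 p.2 u = Qop T a b u - Lamop T a b p u := by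
  simp only [Qop, Lamop]
  module

variable {V : Type*} [NormedAddCommGroup V] [NormedSpace ℝ V] {T : V → V} {a b : ℝ}
  {R TR : V →L[ℝ] V}

theorem LamR_apply_eq_Lamop (hTR : ∀ v, TR v = T (R v)) (p : ℝ × ℝ) (v : V) :
    LamR TR R a b p v = Lamop T a b p (R v) := by
  simp only [LamR, Lamop, add_apply, smul_apply, hTR]

theorem Qop_apply_eq_one_sub_LamR (hQR : ∀ v, Qop T a b (R v) = v) (hTR : ∀ v, TR v = T (R v))
    (p : ℝ × ℝ) (v : V) : Qop T p.1 p.2 (R v) = (1 - LamR TR R a b p) v := by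
  rw [Qop_eq_Qop_sub_Lamop T a b, hQR, ← LamR_apply_eq_Lamop hTR, sub_apply, one_apply_eq_self]

theorem norm_LamR_le (TR R : V →L[ℝ] V) (a b : ℝ) (p : ℝ × ℝ) :
    ‖LamR TR R a b p‖ ≤
      max (2 * |p.1 - a|) |(p.1 ^ 2 + p.2 ^ 2) - (a ^ 2 + b ^ 2)| * (‖TR‖ + ‖R‖) := by
  calc ‖LamR TR R a b p‖
      ≤ ‖(2 * (p.1 - a)) • TR‖ + ‖((a ^ 2 + b ^ 2) - (p.1 ^ 2 + p.2 ^ 2)) • R‖ := norm_add_le _ _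
    _ = 2 * |p.1 - a| * ‖TR‖ + |(p.1 ^ 2 + p.2 ^ 2) - (a ^ 2 + b ^ 2)| * ‖R‖ := by
      rw [norm_smul, norm_smul, Real.norm_eq_abs, Real.norm_eq_abs, abs_mul, abs_two,
        abs_sub_comm (a ^ 2 + b ^ 2)]
    _ ≤ _ := by
      rw [mul_add]
      gcongr
      · exact le_max_left _ _
      · exact le_max_right _ _

end

namespace IsInv

variable {V : Type*} [NormedAddCommGroup V] [NormedSpace ℝ V] {T : V → V} {D Bc : Set V}
  {a b : ℝ} {R TR : V →L[ℝ] V}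

theorem mul_of_Qop_apply_eq (hR : IsInv T D Bc a b R) {x y : ℝ} {S N : V →L[ℝ] V}
    (hQR : ∀ v, Qop T x y (R v) = S v) (hSN : S * N = 1) (hNS : N * S = 1) :
    IsInv T D Bc x y (R * N) := by
  obtain ⟨hmem, -, hRQ⟩ := hR
  refine ⟨fun v => hmem (N v), fun v => ?_, fun u hu => ?_⟩
  · calc Qop T x y ((R * N) v) = (S * N) v := hQR (N v)
      _ = v := by rw [hSN, one_apply_eq_self]
  · obtain ⟨v, rfl⟩ : ∃ v, R v = u := ⟨Qop T a b u, hRQ u hu⟩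
    calc (R * N) (Qop T x y (R v)) = R ((N * S) v) := by rw [hQR]; rfl
      _ = R v := by rw [hNS, one_apply_eq_self]

theorem tsum_comp_LamR_pow (hR : IsInv T D Bc a b R) (hTR : ∀ v, TR v = T (R v)) {p : ℝ × ℝ}
    (hL : Summable fun n : ℕ => LamR TR R a b p ^ n) :
    IsInv T D Bc p.1 p.2 (∑' n : ℕ, R.comp (LamR TR R a b p ^ n)) := by
  have hsum : ∑' n : ℕ, R.comp (LamR TR R a b p ^ n) = R * ∑' n : ℕ, LamR TR R a b p ^ n :=
    hL.tsum_mul_left R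
  rw [hsum]
  exact hR.mul_of_Qop_apply_eq (Qop_apply_eq_one_sub_LamR hR.2.1 hTR p)
    hL.one_sub_mul_tsum_pow hL.tsum_pow_mul_one_sub

end IsInv

theorem stmt1_general {V : Type*} [NormedAddCommGroup V] [NormedSpace ℝ V] [CompleteSpace V]
    (T : V → V) (D Bc : Set V) (a b : ℝ) (R TR : V →L[ℝ] V)
    (hR : IsInv T D Bc a b R) (hTR : ∀ v : V, TR v = T (R v))
    (ε : ℝ) (hε0 : 0 < ε) (hε : ε < 1 / (‖TR‖ + ‖R‖)) :
    (∀ p : ℝ × ℝ,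
        max (2 * |p.1 - a|) |(p.1 ^ 2 + p.2 ^ 2) - (a ^ 2 + b ^ 2)| ≤ ε →
        (‖LamR TR R a b p‖ ≤ ε * (‖TR‖ + ‖R‖) ∧ ε * (‖TR‖ + ‖R‖) < 1) ∧
          p ∈ rhoB T D Bc ∧
          IsInv T D Bc p.1 p.2
            (∑' n : ℕ, R.comp ((LamR TR R a b p) ^ n))) ∧
      TendstoUniformlyOn
        (fun (N : ℕ) (p : ℝ × ℝ) => ∑ n ∈ Finset.range N, R.comp ((LamR TR R a b p) ^ n))
        (fun p : ℝ × ℝ => ∑' n : ℕ, R.comp ((LamR TR R a b p) ^ n))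
        Filter.atTop
        {p : ℝ × ℝ | max (2 * |p.1 - a|) |(p.1 ^ 2 + p.2 ^ 2) - (a ^ 2 + b ^ 2)| ≤ ε} := by
  have hpos : 0 < ‖TR‖ + ‖R‖ := one_div_pos.mp (hε0.trans hε)
  have hlt : ε * (‖TR‖ + ‖R‖) < 1 := (lt_div_iff₀ hpos).mp hε
  have hnorm : ∀ p : ℝ × ℝ,
      max (2 * |p.1 - a|) |(p.1 ^ 2 + p.2 ^ 2) - (a ^ 2 + b ^ 2)| ≤ ε →
        ‖LamR TR R a b p‖ ≤ ε * (‖TR‖ + ‖R‖) := fun p hp =>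
    (norm_LamR_le TR R a b p).trans (mul_le_mul_of_nonneg_right hp hpos.le)
  refine ⟨fun p hp => ?_, tendstoUniformlyOn_tsum_mul_pow R hlt hnorm⟩
  have hInv := hR.tsum_comp_LamR_pow hTR
    (summable_geometric_of_norm_lt_one ((hnorm p hp).trans_lt hlt))
  exact ⟨⟨hnorm p hp, hlt⟩, ⟨_, hInv⟩, hInv⟩

/-- the Neumann-type series for the pseudo-resolvent with boundary conditions. -/
theorem stmt1 {V : Type*} [NormedAddCommGroup V] [NormedSpace ℝ V] [CompleteSpace V]
    (T : V → V) (D Bc : Submodule ℝ V) (hBD : (Bc : Set V) ⊆ (D : Set V))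
    (hTadd : ∀ u ∈ D, ∀ v ∈ D, T (u + v) = T u + T v)
    (hTsmul : ∀ (c : ℝ), ∀ u ∈ D, T (c • u) = c • T u)
    (hTclosed : IsClosed {p : V × V | p.1 ∈ D ∧ p.2 = T p.1})
    (a b : ℝ) (R TR : V →L[ℝ] V)
    (hR : IsInv T (D : Set V) (Bc : Set V) a b R)
    (hTR : ∀ v : V, TR v = T (R v))
    (ε : ℝ) (hε0 : 0 < ε) (hε : ε < 1 / (‖TR‖ + ‖R‖)) :
    (∀ p : ℝ × ℝ,
        max (2 * |p.1 - a|) |(p.1 ^ 2 + p.2 ^ 2) - (a ^ 2 + b ^ 2)| ≤ ε →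
        (‖LamR TR R a b p‖ ≤ ε * (‖TR‖ + ‖R‖) ∧ ε * (‖TR‖ + ‖R‖) < 1) ∧
          p ∈ rhoB T (D : Set V) (Bc : Set V) ∧
          IsInv T (D : Set V) (Bc : Set V) p.1 p.2
            (∑' n : ℕ, R.comp ((LamR TR R a b p) ^ n))) ∧
      TendstoUniformlyOn
        (fun (N : ℕ) (p : ℝ × ℝ) => ∑ n ∈ Finset.range N, R.comp ((LamR TR R a b p) ^ n))
        (fun p : ℝ × ℝ => ∑' n : ℕ, R.comp ((LamR TR R a b p) ^ n))
        Filter.atTop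
        {p : ℝ × ℝ | max (2 * |p.1 - a|) |(p.1 ^ 2 + p.2 ^ 2) - (a ^ 2 + b ^ 2)| ≤ ε} := by
  exact stmt1_general T D Bc a b R TR hR hTR ε hε0 hε
end

section
/- The set ρ_B(T) is an open subset of ℝ². -/
/-!
If `R` inverts `Q_{x,y}`, then `T R` is everywhere defined and, `T` being closed, bounded. Hence
`Q_{x',y'} R = 1 + 2(x - x') T R + (x'² + y'² - x² - y²) R` is a bounded operator that depends
continuously on `(x', y')` and equals `1` at `(x, y)`. It is therefore invertible for `(x', y')`
near `(x, y)`, and `R (Q_{x',y'} R)⁻¹` inverts `Q_{x',y'}`.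
-/

open scoped Topology

theorem continuous_of_eq_comp_of_isClosed_graph {𝕜 E F G : Type*} [NontriviallyNormedField 𝕜]
    [NormedAddCommGroup E] [NormedSpace 𝕜 E] [CompleteSpace E] [TopologicalSpace F]
    [NormedAddCommGroup G] [NormedSpace 𝕜 G] [CompleteSpace G] {T : F → G} {D : Set F}
    (hT : IsClosed {p : F × G | p.1 ∈ D ∧ p.2 = T p.1}) {R : E → F} (hR : Continuous R)
    (hRD : ∀ v, R v ∈ D) (S : E →ₗ[𝕜] G) (hS : ∀ v, S v = T (R v)) : Continuous S := by
  have graph_eq_preimage : (S.graph : Set (E × G)) =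
      (fun q : E × G => (R q.1, q.2)) ⁻¹' {p : F × G | p.1 ∈ D ∧ p.2 = T p.1} := by
    ext q
    simp [LinearMap.mem_graph_iff, hS, hRD]
  refine S.continuous_of_isClosed_graph ?_
  rw [graph_eq_preimage]
  exact hT.preimage (by fun_prop)

theorem Qop_eq_Qop_add {V : Type*} [AddCommGroup V] [Module ℝ V] (T : V → V)
    (x y x' y' : ℝ) (u : V) :
    Qop T x' y' u = Qop T x y u + (2 * (x - x')) • T u
      + (x' ^ 2 + y' ^ 2 - (x ^ 2 + y ^ 2)) • u := by
  unfold Qop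
  module

namespace IsInv

variable {V : Type*} [NormedAddCommGroup V] [NormedSpace ℝ V] {T : V → V} {D B : Set V}
  {x y x' y' : ℝ} {R : V →L[ℝ] V}

theorem apply_mem_domain (hR : IsInv T D B x y R) (v : V) : R v ∈ D :=
  (hR.1 v).1.1

theorem comp_symm (hR : IsInv T D B x y R) (A : V ≃L[ℝ] V)
    (hA : ∀ v, Qop T x' y' (R v) = A v) :
    IsInv T D B x' y' (R ∘L (A.symm : V →L[ℝ] V)) := by
  obtain ⟨mem_domB2, -, left_inv⟩ := hR
  refine ⟨fun v => mem_domB2 _, fun v => ?_, fun u hu => ?_⟩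
  · exact (hA _).trans (A.apply_symm_apply v)
  · have Qop_eq : Qop T x' y' u = A (Qop T x y u) := by rw [← hA, left_inv u hu]
    simp [Qop_eq, left_inv u hu]

theorem rhoB_mem_nhds [CompleteSpace V] (hR : IsInv T D B x y R) (S : V →L[ℝ] V)
    (hS : ∀ v, S v = T (R v)) : rhoB T D B ∈ 𝓝 (x, y) := by
  let QR : ℝ × ℝ → V →L[ℝ] V := fun q =>
    1 + (2 * (x - q.1)) • S + (q.1 ^ 2 + q.2 ^ 2 - (x ^ 2 + y ^ 2)) • R
  have QR_apply (q : ℝ × ℝ) (v : V) : QR q v = Qop T q.1 q.2 (R v) := by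
    simp [QR, Qop_eq_Qop_add T x y q.1 q.2, hR.2.1, hS]
  have continuous_QR : Continuous QR := by fun_prop
  have QR_self : QR (x, y) = ContinuousLinearEquiv.refl ℝ V := by
    ext v
    simp [QR]
  have eventually_invertible : ∀ᶠ q in 𝓝 (x, y), ∃ A : V ≃L[ℝ] V, (A : V →L[ℝ] V) = QR q :=
    (ContinuousLinearEquiv.isOpen.preimage continuous_QR).mem_nhds ⟨_, QR_self.symm⟩
  filter_upwards [eventually_invertible] with q ⟨A, hA⟩
  exact ⟨_, hR.comp_symm A fun v => by rw [← QR_apply, ← hA, ContinuousLinearEquiv.coe_coe]⟩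

end IsInv

theorem stmt2_general {V : Type*} [NormedAddCommGroup V] [NormedSpace ℝ V] [CompleteSpace V]
    (T : V → V) (D B : Set V)
    (hTadd : ∀ u ∈ D, ∀ v ∈ D, u + v ∈ D → T (u + v) = T u + T v)
    (hTsmul : ∀ (c : ℝ), ∀ u ∈ D, c • u ∈ D → T (c • u) = c • T u)
    (hTclosed : IsClosed {p : V × V | p.1 ∈ D ∧ p.2 = T p.1}) :
    IsOpen (rhoB T D B) := by
  rw [isOpen_iff_mem_nhds]
  rintro ⟨x, y⟩ ⟨R, hR⟩
  have hRD := hR.apply_mem_domain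
  let S : V →ₗ[ℝ] V :=
    { toFun := fun v => T (R v)
      map_add' := fun u v => by
        rw [map_add, hTadd _ (hRD u) _ (hRD v) (map_add R u v ▸ hRD (u + v))]
      map_smul' := fun c v => by
        rw [map_smul, hTsmul c _ (hRD v) (map_smul R c v ▸ hRD (c • v)), RingHom.id_apply] }
  have continuous_S : Continuous S :=
    continuous_of_eq_comp_of_isClosed_graph hTclosed R.continuous hRD S fun _ => rfl
  exact hR.rhoB_mem_nhds ⟨S, continuous_S⟩ fun _ => rfl

/-- `ρ_B(T)` is open in `ℝ²`. -/
theorem stmt2 {V : Type*} [NormedAddCommGroup V] [NormedSpace ℝ V] [CompleteSpace V]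
    (T : V → V) (D Bc : Submodule ℝ V) (hBD : (Bc : Set V) ⊆ (D : Set V))
    (hTadd : ∀ u ∈ D, ∀ v ∈ D, T (u + v) = T u + T v)
    (hTsmul : ∀ (c : ℝ), ∀ u ∈ D, T (c • u) = c • T u)
    (hTclosed : IsClosed {p : V × V | p.1 ∈ D ∧ p.2 = T p.1}) :
    IsOpen (rhoB T (D : Set V) (Bc : Set V)) := by
  exact stmt2_general T D Bc (fun u hu v hv _ => hTadd u hu v hv) (fun c u hu _ => hTsmul c u hu)
    hTclosed
end

section
/- The map (x,y) ↦ R_{x,y}, from ρ_B(T) to the Banach space of bounded linear operators on V equipped with the operator norm, is continuous. -/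
/-!
For `p = (x, y)` and `q = (x', y')` in `ρ_B(T)` the resolvent equation reads `R_q (1 - E_q) = R_p`
with `E_q = (Q_p - Q_q) R_p = 2 (x' - x) T R_p + (|p|² - |q|²) R_p`. If `T R_p` is bounded, then
`E_q → 0` in operator norm as `q → p`, and this forces `R_q → R_p`.

As soon as one `q ∈ ρ_B(T)` has `x' ≠ x`, the equation exhibits `R_q T R_p` as a bounded operator;
since `R_q` is injective, `T R_p` has closed graph and is bounded. If there is no such `q`, then
`T R_p` does not occur in any `E_q`.
-/

open Filter Topology

/-- Eventually `‖f‖ ≤ 2 ‖a‖`, so `f - a = f e → 0`. -/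
theorem tendsto_of_mul_one_sub_eq {ι A : Type*} [SeminormedRing A] {l : Filter ι}
    {f e : ι → A} {a : A} (hfe : ∀ᶠ i in l, f i * (1 - e i) = a) (he : Tendsto e l (𝓝 0)) :
    Tendsto f l (𝓝 a) := by
  have he_norm : Tendsto (fun i => ‖e i‖) l (𝓝 0) := tendsto_zero_iff_norm_tendsto_zero.mp he
  have hbound : ∀ᶠ i in l, ‖f i - a‖ ≤ 2 * ‖a‖ * ‖e i‖ := by
    filter_upwards [hfe, he_norm.eventually_le_const one_half_pos] with i hi hei
    have hsub : f i - a = f i * e i := by rw [← hi]; noncomm_ring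
    have hmul : ‖f i - a‖ ≤ ‖f i‖ * ‖e i‖ := hsub ▸ norm_mul_le (f i) (e i)
    have hf : ‖f i‖ ≤ 2 * ‖a‖ := by
      have htri : ‖f i‖ ≤ ‖f i - a‖ + ‖a‖ := by simpa using norm_add_le (f i - a) a
      have hhalf : ‖f i‖ * ‖e i‖ ≤ ‖f i‖ * (1 / 2) := by gcongr
      linarith
    exact hmul.trans (by gcongr)
  rw [tendsto_iff_norm_sub_tendsto_zero]
  refine squeeze_zero' (.of_forall fun i => norm_nonneg _) hbound ?_
  simpa using he_norm.const_mul (2 * ‖a‖)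

/-- The graph of `A` is the closed subspace `{(v, w) | H v = G w}`. -/
theorem exists_clm_coe_eq_of_injective_of_comp_eq {𝕜 E F W : Type*} [NontriviallyNormedField 𝕜]
    [NormedAddCommGroup E] [NormedSpace 𝕜 E] [CompleteSpace E]
    [NormedAddCommGroup F] [NormedSpace 𝕜 F] [CompleteSpace F]
    [AddCommGroup W] [Module 𝕜 W] [TopologicalSpace W] [T2Space W]
    {G : F →L[𝕜] W} {H : E →L[𝕜] W} {A : E → F} (hG : Function.Injective G)
    (hGA : ∀ v, G (A v) = H v) :
    ∃ S : E →L[𝕜] F, ⇑S = A := by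
  let L : E →ₗ[𝕜] F :=
    { toFun := A
      map_add' := fun u v => hG <| by simp only [map_add, hGA]
      map_smul' := fun c v => hG <| by simp only [map_smul, hGA, RingHom.id_apply] }
  have hgraph : (L.graph : Set (E × F)) = {p | H p.1 = G p.2} := by
    ext p
    change p.2 = A p.1 ↔ H p.1 = G p.2
    rw [← hGA, hG.eq_iff, eq_comm]
  have hclosed : IsClosed (L.graph : Set (E × F)) :=
    hgraph ▸ isClosed_eq (by fun_prop) (by fun_prop)
  exact ⟨.ofIsClosedGraph hclosed, rfl⟩

namespace IsInv

variable {V : Type*} [NormedAddCommGroup V] [NormedSpace ℝ V] {T : V → V} {D B : Set V}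
  {x y x' y' : ℝ} {R R' : V →L[ℝ] V}

theorem injective (hR : IsInv T D B x y R) : Function.Injective R :=
  Function.LeftInverse.injective hR.2.1

theorem Qop_apply (hR : IsInv T D B x y R) (x' y' : ℝ) (v : V) :
    Qop T x' y' (R v) =
      v - ((2 * (x' - x)) • T (R v) + ((x ^ 2 + y ^ 2) - (x' ^ 2 + y' ^ 2)) • R v) := by
  have hv : T (T (R v)) - (2 * x) • T (R v) + (x ^ 2 + y ^ 2) • R v = v := hR.2.1 v
  rw [Qop]
  nth_rewrite 4 [← hv]
  module

theorem resolvent_equation (hR : IsInv T D B x y R) (hR' : IsInv T D B x' y' R') (v : V) :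
    R' (v - ((2 * (x' - x)) • T (R v) + ((x ^ 2 + y ^ 2) - (x' ^ 2 + y' ^ 2)) • R v)) = R v := by
  rw [← hR.Qop_apply, hR'.2.2 _ (hR.1 v)]

theorem exists_clm_coe_eq_comp_of_ne [CompleteSpace V] (hR : IsInv T D B x y R)
    (hR' : IsInv T D B x' y' R') (hx : x' ≠ x) : ∃ S : V →L[ℝ] V, ⇑S = T ∘ R := by
  have hne : 2 * (x' - x) ≠ 0 := mul_ne_zero two_ne_zero (sub_ne_zero.mpr hx)
  let H : V →L[ℝ] V :=
    (2 * (x' - x))⁻¹ • (R' - ((x ^ 2 + y ^ 2) - (x' ^ 2 + y' ^ 2)) • R' * R - R)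
  refine exists_clm_coe_eq_of_injective_of_comp_eq (H := H) hR'.injective fun v => ?_
  change R' (T (R v)) =
    (2 * (x' - x))⁻¹ • (R' v - ((x ^ 2 + y ^ 2) - (x' ^ 2 + y' ^ 2)) • R' (R v) - R v)
  have hres := hR.resolvent_equation hR' v
  simp only [map_sub, map_add, map_smul] at hres
  rw [eq_inv_smul_iff₀ hne, eq_sub_iff_add_eq, eq_sub_iff_add_eq, sub_eq_iff_eq_add.mp hres]
  abel

/-- `S` plays the role of `T R`; when all points of `ρ_B(T)` have the same first coordinate, it is
multiplied by zero and `S = 0` will do. -/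
theorem exists_forall_mul_one_sub_eq [CompleteSpace V] (hR : IsInv T D B x y R) :
    ∃ S : V →L[ℝ] V, ∀ (x' y' : ℝ) (R' : V →L[ℝ] V), IsInv T D B x' y' R' →
      R' * (1 - ((2 * (x' - x)) • S + ((x ^ 2 + y ^ 2) - (x' ^ 2 + y' ^ 2)) • R)) = R := by
  obtain ⟨S, hS⟩ : ∃ S : V →L[ℝ] V, ∀ (x' y' : ℝ) (R' : V →L[ℝ] V), IsInv T D B x' y' R' →
      ∀ v, (2 * (x' - x)) • S v = (2 * (x' - x)) • T (R v) := by
    by_cases h : ∃ (x' y' : ℝ) (R' : V →L[ℝ] V), IsInv T D B x' y' R' ∧ x' ≠ x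
    · obtain ⟨x', y', R', hR', hx⟩ := h
      obtain ⟨S, hS⟩ := hR.exists_clm_coe_eq_comp_of_ne hR' hx
      exact ⟨S, fun _ _ _ _ v => by rw [hS, Function.comp_apply]⟩
    · push Not at h
      exact ⟨0, fun x' y' R' hR' v => by simp [h x' y' R' hR']⟩
  refine ⟨S, fun x' y' R' hR' => ContinuousLinearMap.ext fun v => ?_⟩
  rw [← hR.resolvent_equation hR' v, ← hS x' y' R' hR' v]
  rfl

end IsInv

theorem stmt3_general {V : Type*} [NormedAddCommGroup V] [NormedSpace ℝ V] [CompleteSpace V]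
    (T : V → V) (D B : Set V) (Rf : ℝ × ℝ → V →L[ℝ] V)
    (hRf : ∀ p ∈ rhoB T D B, IsInv T D B p.1 p.2 (Rf p)) :
    ContinuousOn Rf (rhoB T D B) := by
  intro p hp
  obtain ⟨S, hS⟩ := (hRf p hp).exists_forall_mul_one_sub_eq
  let E : ℝ × ℝ → V →L[ℝ] V := fun q =>
    (2 * (q.1 - p.1)) • S + ((p.1 ^ 2 + p.2 ^ 2) - (q.1 ^ 2 + q.2 ^ 2)) • Rf p
  have hE : Tendsto E (𝓝 p) (𝓝 0) := by
    have hcont : Continuous E := by fun_prop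
    simpa [E] using hcont.tendsto p
  have hRE : ∀ᶠ q in 𝓝[rhoB T D B] p, Rf q * (1 - E q) = Rf p :=
    eventually_mem_nhdsWithin.mono fun q hq => hS q.1 q.2 (Rf q) (hRf q hq)
  exact tendsto_of_mul_one_sub_eq hRE (hE.mono_left nhdsWithin_le_nhds)

/-- `(x,y) ↦ R_{x,y}` is continuous on `ρ_B(T)` in operator norm. -/
theorem stmt3 {V : Type*} [NormedAddCommGroup V] [NormedSpace ℝ V] [CompleteSpace V]
    (T : V → V) (D Bc : Submodule ℝ V) (hBD : (Bc : Set V) ⊆ (D : Set V))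
    (hTadd : ∀ u ∈ D, ∀ v ∈ D, T (u + v) = T u + T v)
    (hTsmul : ∀ (c : ℝ), ∀ u ∈ D, T (c • u) = c • T u)
    (hTclosed : IsClosed {p : V × V | p.1 ∈ D ∧ p.2 = T p.1})
    (Rf : ℝ × ℝ → V →L[ℝ] V)
    (hRf : ∀ p ∈ rhoB T (D : Set V) (Bc : Set V),
      IsInv T (D : Set V) (Bc : Set V) p.1 p.2 (Rf p)) :
    ContinuousOn Rf (rhoB T (D : Set V) (Bc : Set V)) :=
  stmt3_general T D Bc Rf hRf
end

section
/- The map (x,y) ↦ T∘R_{x,y}, from ρ_B(T) to the Banach space of bounded linear operators on V equipped with the operator norm, is continuous. -/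
/-!
Fix `p ∈ ρ_B(T)` and, for `q ∈ ρ_B(T)`, put `U_q = Q_q R_p`. Since `Q_p R_p = 1`, this is the
bounded operator `1 - 2 (x_q - x_p) T R_p + (|q|² - |p|²) R_p`, which depends continuously on `q`
and has `U_p = 1`. Now `R_p = R_q U_q` gives `T R_p = (T R_q) U_q`, and as `q → p` the factor
`U_q → 1` can be cancelled: `T R_q` stays bounded and hence converges to `T R_p`.
-/

open Filter Topology

theorem tendsto_of_tendsto_mul_of_tendsto_one {ι A : Type*} [SeminormedRing A] {l : Filter ι}
    {a u : ι → A} {b : A} (hau : Tendsto (fun i ↦ a i * u i) l (𝓝 b))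
    (hu : Tendsto u l (𝓝 1)) : Tendsto a l (𝓝 b) := by
  have hsub : Tendsto (fun i ↦ 1 - u i) l (𝓝 0) := by simpa using hu.const_sub 1
  have hsplit (i : ι) : a i * u i + a i * (1 - u i) = a i := by noncomm_ring
  have hbound : ∀ᶠ i in l, ‖a i‖ ≤ 2 * ‖a i * u i‖ := by
    have hsmall : ∀ᶠ i in l, ‖1 - u i‖ < 1 / 2 :=
      hsub.norm.eventually_lt_const (by norm_num)
    filter_upwards [hsmall] with i hi
    have : ‖a i‖ ≤ ‖a i * u i‖ + ‖a i‖ * (1 / 2) := calc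
      ‖a i‖ = ‖a i * u i + a i * (1 - u i)‖ := by rw [hsplit]
      _ ≤ ‖a i * u i‖ + ‖a i‖ * ‖1 - u i‖ := norm_add_le_of_le le_rfl (norm_mul_le _ _)
      _ ≤ ‖a i * u i‖ + ‖a i‖ * (1 / 2) := by gcongr
    linarith
  have hbdd : IsBoundedUnder (· ≤ ·) l (norm ∘ a) :=
    (hau.norm.const_mul 2).isBoundedUnder_le.mono_le hbound
  simpa only [hsplit, add_zero] using hau.add (isBoundedUnder_le_mul_tendsto_zero hbdd hsub)

section Resolvent

variable {V : Type*} [NormedAddCommGroup V] [NormedSpace ℝ V]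

/-- The bounded operator `Q_q ∘ R`, where `R` is the inverse of `Q_p` and `S = T ∘ R`, written in
terms of `R` and `S` only; see `IsInv.qop_apply`. -/
noncomputable def qopComp (R S : V →L[ℝ] V) (p q : ℝ × ℝ) : V →L[ℝ] V :=
  1 - (2 * (q.1 - p.1)) • S + (q.1 ^ 2 + q.2 ^ 2 - (p.1 ^ 2 + p.2 ^ 2)) • R

theorem qopComp_self (R S : V →L[ℝ] V) (p : ℝ × ℝ) : qopComp R S p p = 1 := by
  simp [qopComp]

theorem continuous_qopComp (R S : V →L[ℝ] V) (p : ℝ × ℝ) : Continuous (qopComp R S p) := by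
  unfold qopComp
  fun_prop

theorem tendsto_qopComp_nhdsWithin (R S : V →L[ℝ] V) (p : ℝ × ℝ) (s : Set (ℝ × ℝ)) :
    Tendsto (qopComp R S p) (𝓝[s] p) (𝓝 1) := by
  simpa only [qopComp_self] using
    ((continuous_qopComp R S p).tendsto p).mono_left nhdsWithin_le_nhds

variable {T : V → V} {D B : Set V} {p q : ℝ × ℝ} {R S R' S' : V →L[ℝ] V}

theorem IsInv.qop_apply (hR : IsInv T D B p.1 p.2 R) (hS : ∀ v, S v = T (R v)) (v : V) :
    Qop T q.1 q.2 (R v) = qopComp R S p q v := by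
  have hv : T (T (R v)) - (2 * p.1) • T (R v) + (p.1 ^ 2 + p.2 ^ 2) • R v = v := hR.2.1 v
  calc Qop T q.1 q.2 (R v)
      = (T (T (R v)) - (2 * p.1) • T (R v) + (p.1 ^ 2 + p.2 ^ 2) • R v)
          - (2 * (q.1 - p.1)) • T (R v) + (q.1 ^ 2 + q.2 ^ 2 - (p.1 ^ 2 + p.2 ^ 2)) • R v := by
        rw [Qop]; module
    _ = qopComp R S p q v := by rw [hv, ← hS]; simp [qopComp]

theorem IsInv.apply_qopComp (hR : IsInv T D B p.1 p.2 R) (hR' : IsInv T D B q.1 q.2 R')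
    (hS : ∀ v, S v = T (R v)) (v : V) : R' (qopComp R S p q v) = R v := by
  rw [← hR.qop_apply hS, hR'.2.2 _ (hR.1 v)]

theorem IsInv.mul_qopComp (hR : IsInv T D B p.1 p.2 R) (hR' : IsInv T D B q.1 q.2 R')
    (hS : ∀ v, S v = T (R v)) (hS' : ∀ v, S' v = T (R' v)) : S' * qopComp R S p q = S := by
  ext v
  rw [mul_apply_eq_comp, hS', hR.apply_qopComp hR' hS, hS]

end Resolvent

theorem stmt4_general {V : Type*} [NormedAddCommGroup V] [NormedSpace ℝ V]
    (T : V → V) (D B : Set V) (Rf TRf : ℝ × ℝ → V →L[ℝ] V)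
    (hRf : ∀ p ∈ rhoB T D B, IsInv T D B p.1 p.2 (Rf p))
    (hTRf : ∀ p ∈ rhoB T D B, ∀ v : V, TRf p v = T (Rf p v)) :
    ContinuousOn TRf (rhoB T D B) := by
  intro p hp
  have hfactor : ∀ᶠ q in 𝓝[rhoB T D B] p, TRf q * qopComp (Rf p) (TRf p) p q = TRf p := by
    filter_upwards [self_mem_nhdsWithin] with q hq
    exact (hRf p hp).mul_qopComp (hRf q hq) (hTRf p hp) (hTRf q hq)
  exact tendsto_of_tendsto_mul_of_tendsto_one (tendsto_nhds_of_eventually_eq hfactor)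
    (tendsto_qopComp_nhdsWithin (Rf p) (TRf p) p _)

/-- `(x,y) ↦ T ∘ R_{x,y}` is continuous on `ρ_B(T)` in operator norm. -/
theorem stmt4 {V : Type*} [NormedAddCommGroup V] [NormedSpace ℝ V] [CompleteSpace V]
    (T : V → V) (D Bc : Submodule ℝ V) (hBD : (Bc : Set V) ⊆ (D : Set V))
    (hTadd : ∀ u ∈ D, ∀ v ∈ D, T (u + v) = T u + T v)
    (hTsmul : ∀ (c : ℝ), ∀ u ∈ D, T (c • u) = c • T u)
    (hTclosed : IsClosed {p : V × V | p.1 ∈ D ∧ p.2 = T p.1})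
    (Rf TRf : ℝ × ℝ → V →L[ℝ] V)
    (hRf : ∀ p ∈ rhoB T (D : Set V) (Bc : Set V),
      IsInv T (D : Set V) (Bc : Set V) p.1 p.2 (Rf p))
    (hTRf : ∀ p ∈ rhoB T (D : Set V) (Bc : Set V), ∀ v : V, TRf p v = T (Rf p v)) :
    ContinuousOn TRf (rhoB T (D : Set V) (Bc : Set V)) :=
  stmt4_general T D Bc Rf TRf hRf hTRf
end

section
/- The map (x,y) ↦ R_{x,y}, from the open set ρ_B(T) ⊆ ℝ² to the Banach space of bounded linear operators on V, is continuously differentiable, and its partial derivatives (limits in operator norm) are given by ∂R_{x,y}/∂x = 2 R_{x,y}∘(T∘R_{x,y}) − 2x R_{x,y}∘R_{x,y} and ∂R_{x,y}/∂y = −2y R_{x,y}∘R_{x,y}. -/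
/-!
The resolvent identity `R_q - R_p = R_p ∘ (Q_p - Q_q) ∘ R_q` reads `R_q = R_p (1 + W_q)`, where
`W_q = 2(x_q - x_p) T R_q + (|p|² - |q|²) R_q`, and then also `T R_q = T R_p (1 + W_q)`.
Substituting both into the formula for `W_q` gives `W_q = P_q (1 + W_q)`, where `P_q` has the same
coefficients as `W_q` but involves only the fixed operators `T R_p` and `R_p`. As `P_q` is
polynomial in `q` and vanishes at `q = p`, the term `P_q W_q` is of second order, so `W` has the
derivative of `P` at `p`.
-/

open Topology

theorem norm_le_two_mul_of_eq_add_mul_self {A : Type*} [NonUnitalSeminormedRing A] {a w : A}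
    (ha : ‖a‖ ≤ 1 / 2) (hw : w = a + a * w) : ‖w‖ ≤ 2 * ‖a‖ := by
  have h : ‖w‖ ≤ ‖a‖ + 1 / 2 * ‖w‖ := calc
    ‖w‖ = ‖a + a * w‖ := congrArg norm hw
    _ ≤ ‖a‖ + ‖a‖ * ‖w‖ := norm_add_le_of_le le_rfl (norm_mul_le a w)
    _ ≤ ‖a‖ + 1 / 2 * ‖w‖ := by gcongr
  linarith

theorem hasFDerivWithinAt_of_eq_add_mul_self {𝕜 E A : Type*} [NontriviallyNormedField 𝕜]
    [NormedAddCommGroup E] [NormedSpace 𝕜 E] [NonUnitalNormedRing A] [NormedSpace 𝕜 A]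
    {a w : E → A} {a' : E →L[𝕜] A} {s : Set E} {x : E}
    (ha : HasFDerivWithinAt a a' s x) (hax : a x = 0) (hx : x ∈ s)
    (hw : ∀ y ∈ s, w y = a y + a y * w y) : HasFDerivWithinAt w a' s x := by
  have hwx : w x = 0 := by simpa [hax] using hw x hx
  have ha_zero : Filter.Tendsto a (𝓝[s] x) (𝓝 0) := hax ▸ ha.continuousWithinAt.tendsto
  have ha_bigO : a =O[𝓝[s] x] fun y => y - x := by simpa [hax] using ha.isBigO_sub
  have hwa : w =O[𝓝[s] x] a := by
    have ha_small : ∀ᶠ y in 𝓝[s] x, ‖a y‖ < 1 / 2 :=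
      ha_zero.norm.eventually_lt_const (by norm_num)
    refine .of_bound 2 ?_
    filter_upwards [ha_small, self_mem_nhdsWithin] with y hy hys
    exact norm_le_two_mul_of_eq_add_mul_self hy.le (hw y hys)
  have haw : (fun y => a y * w y) =o[𝓝[s] x] fun y => y - x := by
    have ha_one : a =o[𝓝[s] x] fun _ => (1 : ℝ) := (Asymptotics.isLittleO_one_iff ℝ).2 ha_zero
    have hmul : (fun y => a y * w y) =O[𝓝[s] x] fun y => ‖a y‖ * ‖w y‖ :=
      .of_norm_le fun y => norm_mul_le (a y) (w y)
    have h := ha_one.norm_left.mul_isBigO (hwa.trans ha_bigO).norm_norm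
    simpa only [one_mul, Asymptotics.isLittleO_norm_right] using hmul.trans_isLittleO h
  rw [hasFDerivWithinAt_iff_isLittleO] at ha ⊢
  refine (ha.add haw).congr' ?_ .rfl
  filter_upwards [self_mem_nhdsWithin] with y hy
  simp only [hax, hwx, sub_zero]
  rw [sub_add_eq_add_sub, ← hw y hy]

section Perturbation

variable {V : Type*} [NormedAddCommGroup V] [NormedSpace ℝ V]

/-- The bounded operator `(Q_p - Q_q) ∘ R`, in which the second-order terms cancel, written in
terms of `R` and `TR = T ∘ R`. -/
noncomputable def resolventPerturbation (p q : ℝ × ℝ) (R TR : V →L[ℝ] V) : V →L[ℝ] V :=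
  (2 * (q.1 - p.1)) • TR + (p.1 ^ 2 + p.2 ^ 2 - (q.1 ^ 2 + q.2 ^ 2)) • R

/-- The derivative of `q ↦ resolventPerturbation p q R TR` at `q = p`, a linear map in the
increment of `q`. With `R ∘ R` and `R ∘ TR` in place of `R` and `TR` it is the derivative of the
resolvent. -/
noncomputable def perturbationFDeriv (p : ℝ × ℝ) (R TR : V →L[ℝ] V) : ℝ × ℝ →L[ℝ] V →L[ℝ] V :=
  (ContinuousLinearMap.fst ℝ ℝ ℝ).smulRight ((2 : ℝ) • TR - (2 * p.1) • R) +
    (ContinuousLinearMap.snd ℝ ℝ ℝ).smulRight ((-(2 * p.2)) • R)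

theorem perturbationFDeriv_apply (p h : ℝ × ℝ) (R TR : V →L[ℝ] V) :
    perturbationFDeriv p R TR h =
      h.1 • ((2 : ℝ) • TR - (2 * p.1) • R) + h.2 • (-(2 * p.2)) • R :=
  rfl

theorem resolventPerturbation_self (p : ℝ × ℝ) (R TR : V →L[ℝ] V) :
    resolventPerturbation p p R TR = 0 := by
  simp [resolventPerturbation]

theorem resolventPerturbation_mul (p q : ℝ × ℝ) (R TR A : V →L[ℝ] V) :
    resolventPerturbation p q (R * A) (TR * A) = resolventPerturbation p q R TR * A := by
  simp only [resolventPerturbation, add_mul, smul_mul_assoc]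

theorem resolventPerturbation_apply {T : V → V} {p q : ℝ × ℝ} {R TR : V →L[ℝ] V}
    (hTR : ∀ v, TR v = T (R v)) (v : V) :
    resolventPerturbation p q R TR v = Qop T p.1 p.2 (R v) - Qop T q.1 q.2 (R v) := by
  simp only [resolventPerturbation, Qop, add_apply, smul_apply, hTR]
  module

theorem hasFDerivAt_resolventPerturbation (p : ℝ × ℝ) (R TR : V →L[ℝ] V) :
    HasFDerivAt (fun q => resolventPerturbation p q R TR) (perturbationFDeriv p R TR) p := by
  have hfst : HasFDerivAt (fun q : ℝ × ℝ => q.1) (.fst ℝ ℝ ℝ) p := hasFDerivAt_fst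
  have hsnd : HasFDerivAt (fun q : ℝ × ℝ => q.2) (.snd ℝ ℝ ℝ) p := hasFDerivAt_snd
  have hTR := ((hfst.sub_const p.1).const_mul 2).smul_const TR
  have hR := (((hfst.pow 2).add (hsnd.pow 2)).const_sub (p.1 ^ 2 + p.2 ^ 2)).smul_const R
  refine (hTR.add hR).congr_fderiv (ContinuousLinearMap.ext fun h => ?_)
  simp only [perturbationFDeriv_apply, add_apply, neg_apply, smul_apply,
    ContinuousLinearMap.smulRight_apply, ContinuousLinearMap.coe_fst', ContinuousLinearMap.coe_snd',
    Nat.add_one_sub_one, pow_one, nsmul_eq_mul, Nat.cast_ofNat, smul_eq_mul]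
  module

theorem smul_perturbationFDeriv (p : ℝ × ℝ) (A R TR : V →L[ℝ] V) :
    A • perturbationFDeriv p R TR = perturbationFDeriv p (A * R) (A * TR) := by
  refine ContinuousLinearMap.ext fun h => ?_
  change A * perturbationFDeriv p R TR h = perturbationFDeriv p (A * R) (A * TR) h
  simp only [perturbationFDeriv_apply, mul_add, mul_sub, mul_smul_comm]

theorem continuousOn_perturbationFDeriv {s : Set (ℝ × ℝ)} {F G : ℝ × ℝ → V →L[ℝ] V}
    (hF : ContinuousOn F s) (hG : ContinuousOn G s) :
    ContinuousOn (fun p => perturbationFDeriv p (F p) (G p)) s := by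
  have hsmulRight (c : ℝ × ℝ →L[ℝ] ℝ) : Continuous (c.smulRight : (V →L[ℝ] V) → _) :=
    (ContinuousLinearMap.smulRightL ℝ (ℝ × ℝ) (V →L[ℝ] V) c).continuous
  refine ((hsmulRight _).comp_continuousOn ?_).add ((hsmulRight _).comp_continuousOn ?_) <;>
    fun_prop

end Perturbation

section Resolvent

variable {V : Type*} [NormedAddCommGroup V] [NormedSpace ℝ V] {T : V → V} {D B : Set V}

namespace IsInv

variable {p q : ℝ × ℝ} {R TR S TS : V →L[ℝ] V}

theorem eq_mul_one_add_resolventPerturbation (hR : IsInv T D B p.1 p.2 R)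
    (hS : IsInv T D B q.1 q.2 S) (hTS : ∀ v, TS v = T (S v)) :
    S = R * (1 + resolventPerturbation p q S TS) := by
  ext v
  have hRQ : R (Qop T p.1 p.2 (S v)) = S v := hR.2.2 _ (hS.1 v)
  have hQS : Qop T q.1 q.2 (S v) = v := hS.2.1 v
  simp [resolventPerturbation_apply hTS, hRQ, hQS]

theorem comp_eq_mul_one_add_resolventPerturbation (hR : IsInv T D B p.1 p.2 R)
    (hS : IsInv T D B q.1 q.2 S) (hTR : ∀ v, TR v = T (R v)) (hTS : ∀ v, TS v = T (S v)) :
    TS = TR * (1 + resolventPerturbation p q S TS) := by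
  ext v
  have hSv : S v = R ((1 + resolventPerturbation p q S TS) v) :=
    DFunLike.congr_fun (hR.eq_mul_one_add_resolventPerturbation hS hTS) v
  rw [hTS, hSv, ← hTR, mul_apply_eq_comp]

theorem resolventPerturbation_eq_add_mul_self (hR : IsInv T D B p.1 p.2 R)
    (hS : IsInv T D B q.1 q.2 S) (hTR : ∀ v, TR v = T (R v)) (hTS : ∀ v, TS v = T (S v)) :
    resolventPerturbation p q S TS = resolventPerturbation p q R TR +
      resolventPerturbation p q R TR * resolventPerturbation p q S TS := by
  rw [← mul_one_add, ← resolventPerturbation_mul,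
    ← hR.eq_mul_one_add_resolventPerturbation hS hTS,
    ← hR.comp_eq_mul_one_add_resolventPerturbation hS hTR hTS]

end IsInv

variable {Rf TRf : ℝ × ℝ → V →L[ℝ] V}

theorem hasFDerivWithinAt_resolventPerturbation_resolvent
    (hRf : ∀ p ∈ rhoB T D B, IsInv T D B p.1 p.2 (Rf p))
    (hTRf : ∀ p ∈ rhoB T D B, ∀ v, TRf p v = T (Rf p v)) {p : ℝ × ℝ} (hp : p ∈ rhoB T D B) :
    HasFDerivWithinAt (fun q => resolventPerturbation p q (Rf q) (TRf q))
      (perturbationFDeriv p (Rf p) (TRf p)) (rhoB T D B) p :=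
  hasFDerivWithinAt_of_eq_add_mul_self
    (hasFDerivAt_resolventPerturbation p (Rf p) (TRf p)).hasFDerivWithinAt
    (resolventPerturbation_self p (Rf p) (TRf p)) hp fun q hq =>
      (hRf p hp).resolventPerturbation_eq_add_mul_self (hRf q hq) (hTRf p hp) (hTRf q hq)

theorem hasFDerivWithinAt_resolvent
    (hRf : ∀ p ∈ rhoB T D B, IsInv T D B p.1 p.2 (Rf p))
    (hTRf : ∀ p ∈ rhoB T D B, ∀ v, TRf p v = T (Rf p v)) {p : ℝ × ℝ} (hp : p ∈ rhoB T D B) :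
    HasFDerivWithinAt Rf (perturbationFDeriv p (Rf p * Rf p) (Rf p * TRf p)) (rhoB T D B) p := by
  have h := HasFDerivWithinAt.const_mul
    ((hasFDerivWithinAt_resolventPerturbation_resolvent hRf hTRf hp).const_add 1) (Rf p)
  rw [smul_perturbationFDeriv] at h
  exact HasFDerivWithinAt.congr' h (fun q hq =>
    (hRf p hp).eq_mul_one_add_resolventPerturbation (hRf q hq) (hTRf q hq)) hp

theorem continuousOn_comp_resolvent
    (hRf : ∀ p ∈ rhoB T D B, IsInv T D B p.1 p.2 (Rf p))
    (hTRf : ∀ p ∈ rhoB T D B, ∀ v, TRf p v = T (Rf p v)) : ContinuousOn TRf (rhoB T D B) := by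
  intro p hp
  have hW := (hasFDerivWithinAt_resolventPerturbation_resolvent hRf hTRf hp).continuousWithinAt
  exact (continuousWithinAt_const.mul (continuousWithinAt_const.add hW)).congr_of_mem (fun q hq =>
    (hRf p hp).comp_eq_mul_one_add_resolventPerturbation (hRf q hq) (hTRf p hp) (hTRf q hq)) hp

theorem stmt5_general
    (hRf : ∀ p ∈ rhoB T D B, IsInv T D B p.1 p.2 (Rf p))
    (hTRf : ∀ p ∈ rhoB T D B, ∀ v, TRf p v = T (Rf p v)) :
    ContDiffOn ℝ 1 Rf (rhoB T D B) ∧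
      ∀ p ∈ rhoB T D B,
        HasFDerivWithinAt Rf
          ((ContinuousLinearMap.fst ℝ ℝ ℝ).smulRight
              ((2 : ℝ) • ((Rf p).comp (TRf p)) - (2 * p.1) • ((Rf p).comp (Rf p))) +
            (ContinuousLinearMap.snd ℝ ℝ ℝ).smulRight
              ((-(2 * p.2)) • ((Rf p).comp (Rf p)))) (rhoB T D B) p := by
  have hderiv := fun p (hp : p ∈ rhoB T D B) => hasFDerivWithinAt_resolvent hRf hTRf hp
  have hRcont : ContinuousOn Rf (rhoB T D B) := fun p hp => (hderiv p hp).continuousWithinAt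
  have hderiv_cont := continuousOn_perturbationFDeriv (hRcont.mul hRcont)
    (hRcont.mul (continuousOn_comp_resolvent hRf hTRf))
  refine ⟨?_, hderiv⟩
  rw [← zero_add 1, contDiffOn_succ_iff_hasFDerivWithinAt (by simp)]
  intro p hp
  rw [Set.insert_eq_of_mem hp]
  exact ⟨_, self_mem_nhdsWithin, by simp, _, hderiv, contDiffOn_zero.2 hderiv_cont⟩

end Resolvent

/-- `(x,y) ↦ R_{x,y}` is continuously differentiable on the open set `ρ_B(T)`,
with `∂R/∂x = 2 R∘(T∘R) − 2x R∘R` and `∂R/∂y = −2y R∘R`. -/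
theorem stmt5 {V : Type*} [NormedAddCommGroup V] [NormedSpace ℝ V] [CompleteSpace V]
    (T : V → V) (D Bc : Submodule ℝ V) (hBD : (Bc : Set V) ⊆ (D : Set V))
    (hTadd : ∀ u ∈ D, ∀ v ∈ D, T (u + v) = T u + T v)
    (hTsmul : ∀ (c : ℝ), ∀ u ∈ D, T (c • u) = c • T u)
    (hTclosed : IsClosed {p : V × V | p.1 ∈ D ∧ p.2 = T p.1})
    (hopen : IsOpen (rhoB T (D : Set V) (Bc : Set V)))
    (Rf TRf : ℝ × ℝ → V →L[ℝ] V)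
    (hRf : ∀ p ∈ rhoB T (D : Set V) (Bc : Set V),
      IsInv T (D : Set V) (Bc : Set V) p.1 p.2 (Rf p))
    (hTRf : ∀ p ∈ rhoB T (D : Set V) (Bc : Set V), ∀ v : V, TRf p v = T (Rf p v)) :
    ContDiffOn ℝ 1 Rf (rhoB T (D : Set V) (Bc : Set V)) ∧
      ∀ p ∈ rhoB T (D : Set V) (Bc : Set V),
        HasFDerivAt Rf
          ((ContinuousLinearMap.fst ℝ ℝ ℝ).smulRight
              ((2 : ℝ) • ((Rf p).comp (TRf p)) - (2 * p.1) • ((Rf p).comp (Rf p))) +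
            (ContinuousLinearMap.snd ℝ ℝ ℝ).smulRight
              ((-(2 * p.2)) • ((Rf p).comp (Rf p)))) p := by
  obtain ⟨hcontDiff, hderiv⟩ := stmt5_general hRf hTRf
  exact ⟨hcontDiff, fun p hp => (hderiv p hp).hasFDerivAt (hopen.mem_nhds hp)⟩
end

section
/- The map (x,y) ↦ T∘R_{x,y}, from the open set ρ_B(T) ⊆ ℝ² to the Banach space of bounded linear operators on V, is continuously differentiable, and its partial derivatives (limits in operator norm) are given by ∂(T∘R_{x,y})/∂x = 2 (T∘R_{x,y})∘(T∘R_{x,y}) − 2x (T∘R_{x,y})∘R_{x,y} and ∂(T∘R_{x,y})/∂y = −2y (T∘R_{x,y})∘R_{x,y}. -/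
/-!
Fix `p ∈ ρ_B(T)` and write `R = R_p`, `S = T R_p`. The operators `Q_q` and `Q_p` differ only in
their terms of order at most one in `T`, so `Q_q R_p` is the bounded operator
`P_q = 1 - 2 (q₁ - p₁) S + (|q|² - |p|²) R`, which is polynomial in `q` and equals `1` at `q = p`.
It is therefore invertible for `q` near `p`, where `R_q = R_p P_q⁻¹` and hence
`T R_q = S P_q⁻¹`. Smoothness of inversion in a Banach algebra gives the regularity, and since
`P_p = 1` the derivative at `p` is `-S` times the derivative of `q ↦ P_q`.
-/

open scoped Topology Ring

theorem hasFDerivAt_const_mul_inverse_of_eq_one {𝕜 A E : Type*} [NontriviallyNormedField 𝕜]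
    [NormedRing A] [NormedAlgebra 𝕜 A] [HasSummableGeomSeries A]
    [NormedAddCommGroup E] [NormedSpace 𝕜 E]
    {f : E → A} {f' : E →L[𝕜] A} {x : E} (a : A) (hf : HasFDerivAt f f' x) (hfx : f x = 1) :
    HasFDerivAt (fun y ↦ a * (f y)⁻¹ʳ) (-(a • f')) x := by
  have hinv : HasFDerivAt Ring.inverse (-ContinuousLinearMap.mulLeftRight 𝕜 A 1 1) (f x) := by
    simpa [hfx] using hasFDerivAt_ringInverse (𝕜 := 𝕜) (1 : Aˣ)
  refine ((hinv.comp x hf).const_mul a).congr_fderiv (ContinuousLinearMap.ext fun v ↦ ?_)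
  simp

section Pencil

variable {𝕜 A : Type*}

/-- The element `1 - 2 (q₁ - p₁) S + ((q₁² + q₂²) - (p₁² + p₂²)) R` of an algebra. For operators
`R = R_p` and `S = T R_p` it is the product `Q_q R_p`, which compares the resolvents at `p` and
`q`. -/
def resolventPencil [CommRing 𝕜] [Ring A] [Algebra 𝕜 A] (R S : A) (p q : 𝕜 × 𝕜) : A :=
  1 - (2 * (q.1 - p.1)) • S + (q.1 ^ 2 + q.2 ^ 2 - (p.1 ^ 2 + p.2 ^ 2)) • R

theorem resolventPencil_self [CommRing 𝕜] [Ring A] [Algebra 𝕜 A] (R S : A) (p : 𝕜 × 𝕜) :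
    resolventPencil R S p p = 1 := by
  simp [resolventPencil]

variable [NontriviallyNormedField 𝕜] [NormedRing A] [NormedAlgebra 𝕜 A]

theorem contDiff_resolventPencil {n : WithTop ℕ∞} (R S : A) (p : 𝕜 × 𝕜) :
    ContDiff 𝕜 n (resolventPencil R S p) := by
  unfold resolventPencil
  fun_prop

theorem hasFDerivAt_resolventPencil (R S : A) (p : 𝕜 × 𝕜) :
    HasFDerivAt (resolventPencil R S p)
      ((ContinuousLinearMap.fst 𝕜 𝕜 𝕜).smulRight ((2 * p.1) • R - (2 : 𝕜) • S) +
        (ContinuousLinearMap.snd 𝕜 𝕜 𝕜).smulRight ((2 * p.2) • R)) p := by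
  have hfst : HasFDerivAt (fun q : 𝕜 × 𝕜 ↦ q.1) (ContinuousLinearMap.fst 𝕜 𝕜 𝕜) p :=
    hasFDerivAt_fst
  have hsnd : HasFDerivAt (fun q : 𝕜 × 𝕜 ↦ q.2) (ContinuousLinearMap.snd 𝕜 𝕜 𝕜) p :=
    hasFDerivAt_snd
  have hlinear := ((hfst.sub_const p.1).const_mul 2).smul_const S
  have hquadratic := (((hfst.pow 2).add (hsnd.pow 2)).sub_const (p.1 ^ 2 + p.2 ^ 2)).smul_const R
  refine ((hlinear.const_sub 1).add hquadratic).congr_fderiv (ContinuousLinearMap.ext fun q ↦ ?_)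
  simp only [Nat.add_one_sub_one, pow_one, nsmul_eq_mul, Nat.cast_ofNat, add_apply, neg_apply,
    ContinuousLinearMap.smulRight_apply, smul_apply, ContinuousLinearMap.coe_fst', smul_eq_mul,
    ContinuousLinearMap.coe_snd']
  module

theorem eventually_isUnit_resolventPencil [HasSummableGeomSeries A] (R S : A) (p : 𝕜 × 𝕜) :
    ∀ᶠ q in 𝓝 p, IsUnit (resolventPencil R S p q) := by
  have hcont : ContinuousAt (resolventPencil R S p) p :=
    (contDiff_resolventPencil (n := 0) R S p).continuous.continuousAt
  refine hcont.eventually (Units.isOpen.mem_nhds ?_)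
  exact (resolventPencil_self R S p).symm ▸ isUnit_one

theorem contDiffAt_mul_inverse_resolventPencil [HasSummableGeomSeries A] {n : WithTop ℕ∞}
    (a R S : A) (p : 𝕜 × 𝕜) :
    ContDiffAt 𝕜 n (fun q ↦ a * (resolventPencil R S p q)⁻¹ʳ) p := by
  have hinv : ContDiffAt 𝕜 n Ring.inverse (resolventPencil R S p p) := by
    rw [resolventPencil_self]
    exact contDiffAt_ringInverse 𝕜 (1 : Aˣ)
  exact contDiffAt_const.mul (hinv.comp p (contDiff_resolventPencil R S p).contDiffAt)

theorem hasFDerivAt_mul_inverse_resolventPencil [HasSummableGeomSeries A]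
    (a R S : A) (p : 𝕜 × 𝕜) :
    HasFDerivAt (fun q ↦ a * (resolventPencil R S p q)⁻¹ʳ)
      ((ContinuousLinearMap.fst 𝕜 𝕜 𝕜).smulRight ((2 : 𝕜) • (a * S) - (2 * p.1) • (a * R)) +
        (ContinuousLinearMap.snd 𝕜 𝕜 𝕜).smulRight ((-(2 * p.2)) • (a * R))) p := by
  refine (hasFDerivAt_const_mul_inverse_of_eq_one a (hasFDerivAt_resolventPencil R S p)
    (resolventPencil_self R S p)).congr_fderiv (ContinuousLinearMap.ext fun q ↦ ?_)
  simp only [smul_add, neg_add_rev, add_apply, neg_apply, smul_apply,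
    ContinuousLinearMap.smulRight_apply, ContinuousLinearMap.coe_snd', smul_eq_mul,
    Algebra.mul_smul_comm, ContinuousLinearMap.coe_fst', mul_sub, neg_smul, smul_neg]
  module

end Pencil

section Resolvent

variable {V : Type*} [NormedAddCommGroup V] [NormedSpace ℝ V] {T : V → V} {D Bc : Set V}
  {p q : ℝ × ℝ} {R S : V →L[ℝ] V}

theorem IsInv.unique {R' : V →L[ℝ] V} (h : IsInv T D Bc p.1 p.2 R) (h' : IsInv T D Bc p.1 p.2 R') :
    R = R' := by
  obtain ⟨-, -, hleft⟩ := h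
  obtain ⟨hmem, hright, -⟩ := h'
  ext v
  calc R v = R (Qop T p.1 p.2 (R' v)) := by rw [hright]
    _ = R' v := hleft (R' v) (hmem v)

theorem IsInv.Qop_apply_s6 (h : IsInv T D Bc p.1 p.2 R) (hS : ∀ v, S v = T (R v))
    (q : ℝ × ℝ) (v : V) : Qop T q.1 q.2 (R v) = resolventPencil R S p q v := by
  obtain ⟨-, hright, -⟩ := h
  have hchange : Qop T q.1 q.2 (R v) = Qop T p.1 p.2 (R v) - (2 * (q.1 - p.1)) • T (R v) +
      (q.1 ^ 2 + q.2 ^ 2 - (p.1 ^ 2 + p.2 ^ 2)) • R v := by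
    unfold Qop
    module
  simpa [resolventPencil, hS, hright] using hchange

theorem IsInv.mul_inverse_resolventPencil (h : IsInv T D Bc p.1 p.2 R)
    (hS : ∀ v, S v = T (R v)) (hq : IsUnit (resolventPencil R S p q)) :
    IsInv T D Bc q.1 q.2 (R * (resolventPencil R S p q)⁻¹ʳ) := by
  have hQ := h.Qop_apply_s6 hS q
  obtain ⟨hmem, -, hleft⟩ := h
  refine ⟨fun v ↦ hmem _, fun v ↦ ?_, fun u hu ↦ ?_⟩
  · calc Qop T q.1 q.2 (R ((resolventPencil R S p q)⁻¹ʳ v))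
        = (resolventPencil R S p q * (resolventPencil R S p q)⁻¹ʳ) v := hQ _
      _ = v := by rw [Ring.mul_inverse_cancel _ hq, one_apply_eq_self]
  · calc R ((resolventPencil R S p q)⁻¹ʳ (Qop T q.1 q.2 u))
        = R ((resolventPencil R S p q)⁻¹ʳ (Qop T q.1 q.2 (R (Qop T p.1 p.2 u)))) := by
          rw [hleft u hu]
      _ = R (((resolventPencil R S p q)⁻¹ʳ * resolventPencil R S p q) (Qop T p.1 p.2 u)) := by
          rw [hQ, mul_apply_eq_comp]
      _ = u := by rw [Ring.inverse_mul_cancel _ hq, one_apply_eq_self, hleft u hu]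

theorem IsInv.eventually_mul_inverse_resolventPencil [CompleteSpace V]
    (h : IsInv T D Bc p.1 p.2 R) (hS : ∀ v, S v = T (R v)) :
    ∀ᶠ q in 𝓝 p, IsInv T D Bc q.1 q.2 (R * (resolventPencil R S p q)⁻¹ʳ) :=
  (eventually_isUnit_resolventPencil R S p).mono fun _ hq ↦ h.mul_inverse_resolventPencil hS hq

theorem isOpen_rhoB [CompleteSpace V]
    (hT : ∀ p ∈ rhoB T D Bc, ∃ R S : V →L[ℝ] V, IsInv T D Bc p.1 p.2 R ∧ ∀ v, S v = T (R v)) :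
    IsOpen (rhoB T D Bc) := by
  refine isOpen_iff_mem_nhds.2 fun p hp ↦ ?_
  obtain ⟨R, S, hR, hS⟩ := hT p hp
  exact (hR.eventually_mul_inverse_resolventPencil hS).mono fun q hq ↦ ⟨_, hq⟩

theorem eventuallyEq_mul_inverse_resolventPencil [CompleteSpace V] {Rf TRf : ℝ × ℝ → V →L[ℝ] V}
    (hRf : ∀ p ∈ rhoB T D Bc, IsInv T D Bc p.1 p.2 (Rf p))
    (hTRf : ∀ p ∈ rhoB T D Bc, ∀ v, TRf p v = T (Rf p v)) (hp : p ∈ rhoB T D Bc) :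
    TRf =ᶠ[𝓝 p] fun q ↦ TRf p * (resolventPencil (Rf p) (TRf p) p q)⁻¹ʳ := by
  filter_upwards [(hRf p hp).eventually_mul_inverse_resolventPencil (hTRf p hp)] with q hq
  have hqρ : q ∈ rhoB T D Bc := ⟨_, hq⟩
  ext v
  calc TRf q v = T (Rf q v) := hTRf q hqρ v
    _ = T (Rf p ((resolventPencil (Rf p) (TRf p) p q)⁻¹ʳ v)) := by
        rw [(hRf q hqρ).unique hq, mul_apply_eq_comp]
    _ = TRf p ((resolventPencil (Rf p) (TRf p) p q)⁻¹ʳ v) := (hTRf p hp _).symm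

end Resolvent

theorem stmt6_general {V : Type*} [NormedAddCommGroup V] [NormedSpace ℝ V] [CompleteSpace V]
    {T : V → V} {D Bc : Set V} {Rf TRf : ℝ × ℝ → V →L[ℝ] V}
    (hRf : ∀ p ∈ rhoB T D Bc, IsInv T D Bc p.1 p.2 (Rf p))
    (hTRf : ∀ p ∈ rhoB T D Bc, ∀ v : V, TRf p v = T (Rf p v)) :
    IsOpen (rhoB T D Bc) ∧ (∀ n : WithTop ℕ∞, ContDiffOn ℝ n TRf (rhoB T D Bc)) ∧
      ∀ p ∈ rhoB T D Bc,
        HasFDerivAt TRf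
          ((ContinuousLinearMap.fst ℝ ℝ ℝ).smulRight
              ((2 : ℝ) • ((TRf p).comp (TRf p)) - (2 * p.1) • ((TRf p).comp (Rf p))) +
            (ContinuousLinearMap.snd ℝ ℝ ℝ).smulRight
              ((-(2 * p.2)) • ((TRf p).comp (Rf p)))) p := by
  refine ⟨isOpen_rhoB fun p hp ↦ ⟨Rf p, TRf p, hRf p hp, hTRf p hp⟩, fun n p hp ↦ ?_,
    fun p hp ↦ ?_⟩
  · exact ((contDiffAt_mul_inverse_resolventPencil _ _ _ p).congr_of_eventuallyEq
      (eventuallyEq_mul_inverse_resolventPencil hRf hTRf hp)).contDiffWithinAt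
  · exact (hasFDerivAt_mul_inverse_resolventPencil _ _ _ p).congr_of_eventuallyEq
      (eventuallyEq_mul_inverse_resolventPencil hRf hTRf hp)

/-- `(x,y) ↦ T∘R_{x,y}` is continuously differentiable on the open set `ρ_B(T)`,
with `∂(T∘R)/∂x = 2 (T∘R)∘(T∘R) − 2x (T∘R)∘R` and `∂(T∘R)/∂y = −2y (T∘R)∘R`. -/
theorem stmt6 {V : Type*} [NormedAddCommGroup V] [NormedSpace ℝ V] [CompleteSpace V]
    (T : V → V) (D Bc : Submodule ℝ V) (hBD : (Bc : Set V) ⊆ (D : Set V))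
    (hTadd : ∀ u ∈ D, ∀ v ∈ D, T (u + v) = T u + T v)
    (hTsmul : ∀ (c : ℝ), ∀ u ∈ D, T (c • u) = c • T u)
    (hTclosed : IsClosed {p : V × V | p.1 ∈ D ∧ p.2 = T p.1})
    (hopen : IsOpen (rhoB T (D : Set V) (Bc : Set V)))
    (Rf TRf : ℝ × ℝ → V →L[ℝ] V)
    (hRf : ∀ p ∈ rhoB T (D : Set V) (Bc : Set V),
      IsInv T (D : Set V) (Bc : Set V) p.1 p.2 (Rf p))
    (hTRf : ∀ p ∈ rhoB T (D : Set V) (Bc : Set V), ∀ v : V, TRf p v = T (Rf p v)) :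
    ContDiffOn ℝ 1 TRf (rhoB T (D : Set V) (Bc : Set V)) ∧
      ∀ p ∈ rhoB T (D : Set V) (Bc : Set V),
        HasFDerivAt TRf
          ((ContinuousLinearMap.fst ℝ ℝ ℝ).smulRight
              ((2 : ℝ) • ((TRf p).comp (TRf p)) - (2 * p.1) • ((TRf p).comp (Rf p))) +
            (ContinuousLinearMap.snd ℝ ℝ ℝ).smulRight
              ((-(2 * p.2)) • ((TRf p).comp (Rf p)))) p := by
  exact (stmt6_general hRf hTRf).2.imp_left fun h ↦ h 1
end

section
/- The S-resolvent set with boundary conditions ρ_{S,B}(T) is an open subset of ℍ, and it is axially symmetric: if s ∈ ρ_{S,B}(T), then every q ∈ ℍ with Re q = Re s and |q| = |s| also belongs to ρ_{S,B}(T). -/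
/-- A two-sided Banach module structure over the quaternions `ℍ = Quaternion ℝ` on a real
Banach space `V`: commuting left (`lm`) and right (`rm`) `ℍ`-module structures, compatible
with the real vector space structure, with a norm bound `‖a·v‖, ‖v·a‖ ≤ C|a|‖v‖`. -/
structure QuatBimodule (V : Type*) [NormedAddCommGroup V] [NormedSpace ℝ V] where
  /-- left multiplication `v ↦ a·v` (real-linear in `v`) -/
  lm : Quaternion ℝ → V →ₗ[ℝ] V
  /-- right multiplication `v ↦ v·a` (real-linear in `v`) -/
  rm : Quaternion ℝ → V →ₗ[ℝ] V
  lm_add : ∀ (a b : Quaternion ℝ) (v : V), lm (a + b) v = lm a v + lm b v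
  rm_add : ∀ (a b : Quaternion ℝ) (v : V), rm (a + b) v = rm a v + rm b v
  lm_mul : ∀ (a b : Quaternion ℝ) (v : V), lm (a * b) v = lm a (lm b v)
  rm_mul : ∀ (a b : Quaternion ℝ) (v : V), rm (a * b) v = rm b (rm a v)
  lm_rm_comm : ∀ (a b : Quaternion ℝ) (v : V), lm a (rm b v) = rm b (lm a v)
  lm_real : ∀ (r : ℝ) (v : V), lm (r : Quaternion ℝ) v = r • v
  rm_real : ∀ (r : ℝ) (v : V), rm (r : Quaternion ℝ) v = r • v
  bound : ∃ C : ℝ, ∀ (a : Quaternion ℝ) (v : V),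
    ‖lm a v‖ ≤ C * ‖a‖ * ‖v‖ ∧ ‖rm a v‖ ≤ C * ‖a‖ * ‖v‖

/-- The operator `Q_{s,B}[T] u = T²u − 2(Re s) Tu + |s|² u`. -/
noncomputable def Qq {V : Type*} [NormedAddCommGroup V] [NormedSpace ℝ V]
    (T : V → V) (s : Quaternion ℝ) (u : V) : V :=
  T (T u) - (2 * s.re) • T u + (‖s‖ ^ 2) • u

/-- `R` is a bounded two-sided inverse of `Q_{s,B}[T] : dom_B(T²) → V`. -/
def IsInvQ {V : Type*} [NormedAddCommGroup V] [NormedSpace ℝ V]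
    (T : V → V) (D Bc : Set V) (s : Quaternion ℝ) (R : V →L[ℝ] V) : Prop :=
  (∀ v : V, R v ∈ domB2 T D Bc) ∧ (∀ v : V, Qq T s (R v) = v) ∧
    (∀ u ∈ domB2 T D Bc, R (Qq T s u) = u)

/-- The `S`-resolvent set with boundary conditions `ρ_{S,B}(T) ⊆ ℍ`. -/
def rhoSB {V : Type*} [NormedAddCommGroup V] [NormedSpace ℝ V]
    (T : V → V) (D Bc : Set V) : Set (Quaternion ℝ) :=
  {s | ∃ R : V →L[ℝ] V, IsInvQ T D Bc s R}

/-!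
The operator `Q_{s,B}[T]` sees `s` only through the coefficients `(2 Re s, |s|²)` of the quadratic
pencil `T² - aT + b`, so `ρ_{S,B}(T)` is the preimage of a subset of `ℝ × ℝ` under a continuous map;
this already gives axial symmetry. That subset is open: if `R` inverts the pencil at `(a, b)`, then
`TR` is bounded by the closed graph theorem, and the pencil at `(a', b')` composed with `R` is
`1 - (a' - a) TR + (b' - b) R`. This is norm-continuous in `(a', b')` and equals `1` at `(a, b)`,
hence is invertible nearby, and `R (1 - (a' - a) TR + (b' - b) R)⁻¹` inverts the pencil there.
-/

section BoundedInverse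

variable {𝕜 E F G : Type*} [Semiring 𝕜]
  [AddCommMonoid E] [TopologicalSpace E] [Module 𝕜 E]
  [AddCommMonoid F] [TopologicalSpace F] [Module 𝕜 F]
  [AddCommMonoid G] [TopologicalSpace G] [Module 𝕜 G]

/-- `R` is a bounded (that is, continuous linear) two-sided inverse of the operator `Q` with domain
`S`. The operator is encoded as a total function `Q`, whose values outside `S` are junk. -/
structure IsBoundedInverse (Q : E → F) (S : Set E) (R : F →L[𝕜] E) : Prop where
  mem (v : F) : R v ∈ S
  right_inv (v : F) : Q (R v) = v
  left_inv : ∀ u ∈ S, R (Q u) = u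

theorem IsBoundedInverse.comp_symm {Q : E → F} {Q' : E → G} {S : Set E} {R : F →L[𝕜] E}
    (hR : IsBoundedInverse Q S R) (U : F ≃L[𝕜] G) (hU : ∀ v, Q' (R v) = U v) :
    IsBoundedInverse Q' S (R ∘L (U.symm : G →L[𝕜] F)) where
  mem w := hR.mem (U.symm w)
  right_inv w := (hU (U.symm w)).trans (U.apply_symm_apply w)
  left_inv u hu := by
    have hQ' : Q' u = U (Q u) := by rw [← hU, hR.left_inv u hu]
    simp only [ContinuousLinearMap.comp_apply, ContinuousLinearEquiv.coe_coe, hQ',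
      U.symm_apply_apply, hR.left_inv u hu]

end BoundedInverse

section ClosedOperator

variable {𝕜 E F G : Type*} [NontriviallyNormedField 𝕜]
  [NormedAddCommGroup E] [NormedSpace 𝕜 E]
  [NormedAddCommGroup F] [NormedSpace 𝕜 F]
  [NormedAddCommGroup G] [NormedSpace 𝕜 G]

theorem exists_continuousLinearMap_eq_comp_of_isClosed_graph [CompleteSpace E] [CompleteSpace G]
    {T : F → G} {D : Submodule 𝕜 F}
    (hTadd : ∀ u ∈ D, ∀ v ∈ D, T (u + v) = T u + T v)
    (hTsmul : ∀ (c : 𝕜), ∀ u ∈ D, T (c • u) = c • T u)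
    (hTclosed : IsClosed {p : F × G | p.1 ∈ D ∧ p.2 = T p.1})
    (R : E →L[𝕜] F) (hR : ∀ v, R v ∈ D) :
    ∃ A : E →L[𝕜] G, ∀ v, A v = T (R v) := by
  let TR : E →ₗ[𝕜] G :=
    { toFun := fun v => T (R v)
      map_add' := fun u v => by rw [map_add, hTadd _ (hR u) _ (hR v)]
      map_smul' := fun c v => by rw [map_smul, hTsmul _ _ (hR v), RingHom.id_apply] }
  have graph_eq_preimage : (TR.graph : Set (E × G)) =
      (fun p : E × G => (R p.1, p.2)) ⁻¹' {p : F × G | p.1 ∈ D ∧ p.2 = T p.1} := by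
    ext p
    simp [TR, LinearMap.mem_graph_iff, hR]
  have isClosed_graph : IsClosed (TR.graph : Set (E × G)) := by
    rw [graph_eq_preimage]
    exact hTclosed.preimage (by fun_prop)
  exact ⟨.ofIsClosedGraph isClosed_graph, fun _ => rfl⟩

end ClosedOperator

section QuadraticPencil

/-- The quadratic operator pencil `T² - aT + b` at the coefficients `p = (a, b)`; the sign of `a` is
chosen so that `Q_s[T]` is the pencil at `(2 Re s, |s|²)`. -/
def quadraticPencil {𝕜 E : Type*} [Ring 𝕜] [AddCommGroup E] [Module 𝕜 E]
    (T : E → E) (p : 𝕜 × 𝕜) (u : E) : E :=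
  T (T u) - p.1 • T u + p.2 • u

theorem quadraticPencil_eq_sub_add {𝕜 E : Type*} [Ring 𝕜] [AddCommGroup E] [Module 𝕜 E]
    (T : E → E) (p q : 𝕜 × 𝕜) (u : E) :
    quadraticPencil T q u =
      quadraticPencil T p u - (q.1 - p.1) • T u + (q.2 - p.2) • u := by
  simp only [quadraticPencil, sub_smul]
  abel

/-- The coefficients at which the quadratic pencil of `T`, restricted to the domain `S`, has a
bounded inverse: the analogue of the resolvent set for quadratic pencils. -/
def pencilResolventSet (𝕜 : Type*) {E : Type*} [Ring 𝕜] [AddCommGroup E] [TopologicalSpace E]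
    [Module 𝕜 E] (T : E → E) (S : Set E) : Set (𝕜 × 𝕜) :=
  {p | ∃ R : E →L[𝕜] E, IsBoundedInverse (quadraticPencil T p) S R}

theorem isOpen_pencilResolventSet {𝕜 E : Type*} [NontriviallyNormedField 𝕜]
    [NormedAddCommGroup E] [NormedSpace 𝕜 E] [CompleteSpace E]
    {T : E → E} {D : Submodule 𝕜 E} {S : Set E} (hSD : S ⊆ D)
    (hTadd : ∀ u ∈ D, ∀ v ∈ D, T (u + v) = T u + T v)
    (hTsmul : ∀ (c : 𝕜), ∀ u ∈ D, T (c • u) = c • T u)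
    (hTclosed : IsClosed {p : E × E | p.1 ∈ D ∧ p.2 = T p.1}) :
    IsOpen (pencilResolventSet 𝕜 T S) := by
  rw [isOpen_iff_mem_nhds]
  rintro p ⟨R, hR⟩
  obtain ⟨A, hA⟩ := exists_continuousLinearMap_eq_comp_of_isClosed_graph hTadd hTsmul hTclosed R
    fun v => hSD (hR.mem v)
  let M : 𝕜 × 𝕜 → E →L[𝕜] E := fun q => .id 𝕜 E - (q.1 - p.1) • A + (q.2 - p.2) • R
  have pencil_comp (q : 𝕜 × 𝕜) (v : E) : quadraticPencil T q (R v) = M q v := by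
    rw [quadraticPencil_eq_sub_add T p q, hR.right_inv, ← hA]
    rfl
  have continuous_M : Continuous M := by fun_prop
  have M_self : M p ∈ Set.range ((↑) : (E ≃L[𝕜] E) → E →L[𝕜] E) :=
    ⟨.refl 𝕜 E, by simp [M]⟩
  filter_upwards [(ContinuousLinearEquiv.isOpen.preimage continuous_M).mem_nhds M_self]
    with q ⟨U, hU⟩
  exact ⟨_, hR.comp_symm U fun v => by rw [pencil_comp, ← hU, ContinuousLinearEquiv.coe_coe]⟩

end QuadraticPencil

section SResolventSet

variable {V : Type*} [NormedAddCommGroup V] [NormedSpace ℝ V]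

theorem isInvQ_iff_isBoundedInverse {T : V → V} {D B : Set V} {s : Quaternion ℝ} {R : V →L[ℝ] V} :
    IsInvQ T D B s R ↔
      IsBoundedInverse (quadraticPencil T (2 * s.re, ‖s‖ ^ 2)) (domB2 T D B) R :=
  ⟨fun ⟨mem, right_inv, left_inv⟩ => ⟨mem, right_inv, left_inv⟩,
    fun ⟨mem, right_inv, left_inv⟩ => ⟨mem, right_inv, left_inv⟩⟩

theorem rhoSB_eq_preimage_pencilResolventSet (T : V → V) (D B : Set V) :
    rhoSB T D B =
      (fun s : Quaternion ℝ => (2 * s.re, ‖s‖ ^ 2)) ⁻¹' pencilResolventSet ℝ T (domB2 T D B) :=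
  Set.ext fun _ => exists_congr fun _ => isInvQ_iff_isBoundedInverse

theorem mem_rhoSB_of_re_eq_of_norm_eq {T : V → V} {D B : Set V} {s q : Quaternion ℝ}
    (hs : s ∈ rhoSB T D B) (hre : q.re = s.re) (hnorm : ‖q‖ = ‖s‖) : q ∈ rhoSB T D B := by
  rw [rhoSB_eq_preimage_pencilResolventSet, Set.mem_preimage] at hs ⊢
  rwa [hre, hnorm]

theorem isOpen_rhoSB [CompleteSpace V] {T : V → V} {D : Submodule ℝ V} (B : Set V)
    (hTadd : ∀ u ∈ D, ∀ v ∈ D, T (u + v) = T u + T v)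
    (hTsmul : ∀ (c : ℝ), ∀ u ∈ D, T (c • u) = c • T u)
    (hTclosed : IsClosed {p : V × V | p.1 ∈ D ∧ p.2 = T p.1}) :
    IsOpen (rhoSB T (D : Set V) B) := by
  have continuous_coeffs : Continuous fun s : Quaternion ℝ => (2 * s.re, ‖s‖ ^ 2) :=
    (Quaternion.continuous_re.const_mul 2).prodMk (continuous_norm.pow 2)
  have domB2_subset : domB2 T (D : Set V) B ⊆ D := fun _ hu => hu.1.1
  rw [rhoSB_eq_preimage_pencilResolventSet]
  exact (isOpen_pencilResolventSet domB2_subset hTadd hTsmul hTclosed).preimage continuous_coeffs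

end SResolventSet

theorem stmt7_general {V : Type*} [NormedAddCommGroup V] [NormedSpace ℝ V] [CompleteSpace V]
    (T : V → V) (D : Submodule ℝ V) (B : Set V)
    (hTadd : ∀ u ∈ D, ∀ v ∈ D, T (u + v) = T u + T v)
    (hTsmul : ∀ (c : ℝ), ∀ u ∈ D, T (c • u) = c • T u)
    (hTclosed : IsClosed {p : V × V | p.1 ∈ D ∧ p.2 = T p.1}) :
    IsOpen (rhoSB T (D : Set V) B) ∧
      ∀ s ∈ rhoSB T (D : Set V) B, ∀ q : Quaternion ℝ,
        q.re = s.re → ‖q‖ = ‖s‖ → q ∈ rhoSB T (D : Set V) B :=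
  ⟨isOpen_rhoSB B hTadd hTsmul hTclosed,
    fun _ hs _ hre hnorm => mem_rhoSB_of_re_eq_of_norm_eq hs hre hnorm⟩

/-- `ρ_{S,B}(T)` is open in `ℍ` and axially symmetric. -/
theorem stmt7 {V : Type*} [NormedAddCommGroup V] [NormedSpace ℝ V] [CompleteSpace V]
    (P : QuatBimodule V) (T : V → V) (D Bc : Submodule ℝ V)
    (hBD : (Bc : Set V) ⊆ (D : Set V))
    (hDrm : ∀ (a : Quaternion ℝ), ∀ v ∈ D, P.rm a v ∈ D)
    (hBrm : ∀ (a : Quaternion ℝ), ∀ v ∈ Bc, P.rm a v ∈ Bc)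
    (hTadd : ∀ u ∈ D, ∀ v ∈ D, T (u + v) = T u + T v)
    (hTsmul : ∀ (c : ℝ), ∀ u ∈ D, T (c • u) = c • T u)
    (hTrm : ∀ (a : Quaternion ℝ), ∀ u ∈ D, T (P.rm a u) = P.rm a (T u))
    (hTclosed : IsClosed {p : V × V | p.1 ∈ D ∧ p.2 = T p.1}) :
    IsOpen (rhoSB T (D : Set V) (Bc : Set V)) ∧
      ∀ s ∈ rhoSB T (D : Set V) (Bc : Set V), ∀ q : Quaternion ℝ,
        q.re = s.re → ‖q‖ = ‖s‖ → q ∈ rhoSB T (D : Set V) (Bc : Set V) :=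
  stmt7_general T D Bc hTadd hTsmul hTclosed
end

section
/- Assume ρ_{S,B}(T) ≠ ∅. Then the maps s ↦ S_{L,B}^{-1}(s,T) and s ↦ S_{R,B}^{-1}(s,T), from the open set ρ_{S,B}(T) ⊆ ℍ ≅ ℝ⁴ to the Banach space of bounded real-linear operators on V (operator norm), are continuously differentiable. -/
/-!
Write `R_s` for `Q_{s,B}[T]⁻¹` and `A_s` for `T R_s`. The operator
`Q_s R_p = 1 - 2 (Re s - Re p) A_p + (|s|² - |p|²) R_p` is smooth in `s` and equals `1` at `s = p`,
so its inverse exists and is smooth near `p`. Since `R_s (Q_s R_p) = R_p` and, applying `T`,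
`A_s (Q_s R_p) = A_p`, both `R_s` and `A_s` are smooth at `p`. The `S`-resolvent operators are
polynomial in `R_s`, `A_s` and left multiplication by `s̄`.
-/

section NormedRing

variable {𝕜 E 𝔸 : Type*} [NontriviallyNormedField 𝕜] [NormedAddCommGroup E] [NormedSpace 𝕜 E]
  [NormedRing 𝔸] [NormedAlgebra 𝕜 𝔸] [HasSummableGeomSeries 𝔸]

theorem contDiffWithinAt_of_mul_eq {n : WithTop ℕ∞} {f g h : E → 𝔸} {s : Set E} {x : E}
    (hg : ContDiffWithinAt 𝕜 n g s x) (hh : ContDiffWithinAt 𝕜 n h s x) (hgx : IsUnit (g x))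
    (hx : x ∈ s) (hfg : ∀ y ∈ s, f y * g y = h y) :
    ContDiffWithinAt 𝕜 n f s x := by
  have hinv : ContDiffAt 𝕜 n Ring.inverse (g x) := by
    obtain ⟨u, hu⟩ := hgx
    exact hu ▸ contDiffAt_ringInverse 𝕜 u
  refine (hh.mul (hinv.comp_contDiffWithinAt x hg)).congr_of_eventuallyEq_of_mem ?_ hx
  filter_upwards [self_mem_nhdsWithin,
    hg.continuousWithinAt.eventually (Units.isOpen.mem_nhds hgx)] with y hy hgy
  exact (Ring.eq_mul_inverse_iff_mul_eq _ _ _ hgy).2 (hfg y hy)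

end NormedRing

theorem contDiff_quaternion_re {n : WithTop ℕ∞} :
    ContDiff ℝ n fun s : Quaternion ℝ => s.re := by
  simpa [Quaternion.inner_def] using
    (contDiff_id (𝕜 := ℝ) (E := Quaternion ℝ) (n := n)).inner ℝ (contDiff_const (c := 1))

section Resolvent

variable {V : Type*} [NormedAddCommGroup V] [NormedSpace ℝ V]

/-- Left multiplication by quaternions, bundled as a bounded real-linear map into the bounded
operators on `V`. -/
noncomputable def QuatBimodule.lmCLM (P : QuatBimodule V) : Quaternion ℝ →L[ℝ] V →L[ℝ] V :=
  LinearMap.mkContinuous₂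
    (LinearMap.mk₂ ℝ (fun a v => P.lm a v) P.lm_add
      (fun c a v => by rw [← Quaternion.coe_mul_eq_smul, P.lm_mul, P.lm_real])
      (fun a => map_add (P.lm a)) fun c a v => map_smul (P.lm a) c v)
    P.bound.choose fun a v => (P.bound.choose_spec a v).1

@[simp]
theorem QuatBimodule.lmCLM_apply (P : QuatBimodule V) (a : Quaternion ℝ) (v : V) :
    P.lmCLM a v = P.lm a v :=
  rfl

theorem QuatBimodule.contDiff_lmCLM_star (P : QuatBimodule V) {n : WithTop ℕ∞} :
    ContDiff ℝ n fun s => P.lmCLM (star s) := by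
  have : StarModule ℝ (Quaternion ℝ) := ⟨Quaternion.star_smul⟩
  exact P.lmCLM.contDiff.comp (starL' ℝ (A := Quaternion ℝ)).contDiff

/-- The operator `Q_s[T] Q_p[T]⁻¹`, written so that its dependence on `s` is explicit: `R` stands
for `Q_p[T]⁻¹` and `A` for `T Q_p[T]⁻¹`. -/
noncomputable def qqMulInv (R A : V →L[ℝ] V) (p s : Quaternion ℝ) : V →L[ℝ] V :=
  1 - (2 * (s.re - p.re)) • A + (‖s‖ ^ 2 - ‖p‖ ^ 2) • R

@[simp]
theorem qqMulInv_self (R A : V →L[ℝ] V) (p : Quaternion ℝ) : qqMulInv R A p p = 1 := by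
  simp [qqMulInv]

theorem contDiff_qqMulInv {n : WithTop ℕ∞} (R A : V →L[ℝ] V) (p : Quaternion ℝ) :
    ContDiff ℝ n (qqMulInv R A p) := by
  have hre : ContDiff ℝ n fun s : Quaternion ℝ => s.re := contDiff_quaternion_re
  have hnorm : ContDiff ℝ n fun s : Quaternion ℝ => ‖s‖ ^ 2 := contDiff_norm_sq ℝ
  unfold qqMulInv
  fun_prop

theorem Qq_eq_Qq_sub_add (T : V → V) (p s : Quaternion ℝ) (u : V) :
    Qq T s u = Qq T p u - (2 * (s.re - p.re)) • T u + (‖s‖ ^ 2 - ‖p‖ ^ 2) • u := by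
  simp only [Qq]
  module

namespace IsInvQ

variable {T : V → V} {D B : Set V} {p s : Quaternion ℝ} {R R' A A' : V →L[ℝ] V}

theorem Qq_apply (hR : IsInvQ T D B p R) (hA : ∀ v, A v = T (R v)) (s : Quaternion ℝ) (v : V) :
    Qq T s (R v) = qqMulInv R A p s v := by
  rw [Qq_eq_Qq_sub_add T p, hR.2.1, ← hA]
  rfl

theorem mul_qqMulInv (hR' : IsInvQ T D B s R') (hR : IsInvQ T D B p R)
    (hA : ∀ v, A v = T (R v)) : R' * qqMulInv R A p s = R := by
  ext v
  calc R' (qqMulInv R A p s v) = R' (Qq T s (R v)) := by rw [hR.Qq_apply hA]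
    _ = R v := hR'.2.2 _ (hR.1 v)

theorem comp_mul_qqMulInv (hR' : IsInvQ T D B s R') (hR : IsInvQ T D B p R)
    (hA' : ∀ v, A' v = T (R' v)) (hA : ∀ v, A v = T (R v)) : A' * qqMulInv R A p s = A := by
  ext v
  calc A' (qqMulInv R A p s v) = T ((R' * qqMulInv R A p s) v) := hA' _
    _ = A v := by rw [hR'.mul_qqMulInv hR hA, hA]

end IsInvQ

variable [CompleteSpace V] {n : WithTop ℕ∞} {T : V → V} {D B : Set V}
  {R A : Quaternion ℝ → V →L[ℝ] V}

theorem contDiffOn_of_mul_qqMulInv {S : Set (Quaternion ℝ)} {F : Quaternion ℝ → V →L[ℝ] V}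
    (hF : ∀ p ∈ S, ∀ s ∈ S, F s * qqMulInv (R p) (A p) p s = F p) : ContDiffOn ℝ n F S :=
  fun p hp => contDiffWithinAt_of_mul_eq (contDiff_qqMulInv (R p) (A p) p).contDiffWithinAt
    contDiffWithinAt_const (by simp) hp (hF p hp)

theorem contDiffOn_inverse_Qq (hR : ∀ s ∈ rhoSB T D B, IsInvQ T D B s (R s))
    (hA : ∀ s ∈ rhoSB T D B, ∀ v, A s v = T (R s v)) : ContDiffOn ℝ n R (rhoSB T D B) :=
  contDiffOn_of_mul_qqMulInv fun p hp s hs => (hR s hs).mul_qqMulInv (hR p hp) (hA p hp)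

theorem contDiffOn_comp_inverse_Qq (hR : ∀ s ∈ rhoSB T D B, IsInvQ T D B s (R s))
    (hA : ∀ s ∈ rhoSB T D B, ∀ v, A s v = T (R s v)) : ContDiffOn ℝ n A (rhoSB T D B) :=
  contDiffOn_of_mul_qqMulInv fun p hp s hs =>
    (hR s hs).comp_mul_qqMulInv (hR p hp) (hA s hs) (hA p hp)

end Resolvent

theorem stmt8_general {V : Type*} [NormedAddCommGroup V] [NormedSpace ℝ V] [CompleteSpace V]
    (P : QuatBimodule V) (n : WithTop ℕ∞) (T : V → V) (D B : Set V)
    (R : Quaternion ℝ → V →L[ℝ] V) (hR : ∀ s ∈ rhoSB T D B, IsInvQ T D B s (R s))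
    (SL SR : Quaternion ℝ → V →L[ℝ] V)
    (hSL : ∀ s ∈ rhoSB T D B, ∀ v, SL s v = R s (P.lm (star s) v) - T (R s v))
    (hSR : ∀ s ∈ rhoSB T D B, ∀ v, SR s v = P.lm (star s) (R s v) - T (R s v)) :
    ContDiffOn ℝ n SL (rhoSB T D B) ∧ ContDiffOn ℝ n SR (rhoSB T D B) := by
  let L : Quaternion ℝ → V →L[ℝ] V := fun s => P.lmCLM (star s)
  -- Solving the formula for `SL` for `T Q_s[T]⁻¹` exhibits the latter as a bounded operator.
  let A : Quaternion ℝ → V →L[ℝ] V := fun s => R s * L s - SL s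
  have hA : ∀ s ∈ rhoSB T D B, ∀ v, A s v = T (R s v) := fun s hs v => by
    simp [A, L, hSL s hs]
  have hL_contDiff : ContDiffOn ℝ n L (rhoSB T D B) := P.contDiff_lmCLM_star.contDiffOn
  have hR_contDiff : ContDiffOn ℝ n R (rhoSB T D B) := contDiffOn_inverse_Qq hR hA
  have hA_contDiff : ContDiffOn ℝ n A (rhoSB T D B) := contDiffOn_comp_inverse_Qq hR hA
  have hSL_eq : ∀ s ∈ rhoSB T D B, SL s = R s * L s - A s := fun s _ => by simp [A]
  have hSR_eq : ∀ s ∈ rhoSB T D B, SR s = L s * R s - A s := fun s hs => by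
    ext v
    simp [hSR s hs, hA s hs, L]
  exact ⟨((hR_contDiff.mul hL_contDiff).sub hA_contDiff).congr hSL_eq,
    ((hL_contDiff.mul hR_contDiff).sub hA_contDiff).congr hSR_eq⟩

/-- the `S`-resolvent operators `s ↦ S_{L,B}^{-1}(s,T)` and
`s ↦ S_{R,B}^{-1}(s,T)` are continuously differentiable on `ρ_{S,B}(T) ⊆ ℍ ≅ ℝ⁴`
with values in the bounded real-linear operators on `V`. -/
theorem stmt8 {V : Type*} [NormedAddCommGroup V] [NormedSpace ℝ V] [CompleteSpace V]
    (P : QuatBimodule V) (T : V → V) (D Bc : Submodule ℝ V)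
    (hBD : (Bc : Set V) ⊆ (D : Set V))
    (hDrm : ∀ (a : Quaternion ℝ), ∀ v ∈ D, P.rm a v ∈ D)
    (hBrm : ∀ (a : Quaternion ℝ), ∀ v ∈ Bc, P.rm a v ∈ Bc)
    (hTadd : ∀ u ∈ D, ∀ v ∈ D, T (u + v) = T u + T v)
    (hTsmul : ∀ (c : ℝ), ∀ u ∈ D, T (c • u) = c • T u)
    (hTrm : ∀ (a : Quaternion ℝ), ∀ u ∈ D, T (P.rm a u) = P.rm a (T u))
    (hTclosed : IsClosed {p : V × V | p.1 ∈ D ∧ p.2 = T p.1})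
    (hne : (rhoSB T (D : Set V) (Bc : Set V)).Nonempty)
    (Rf : Quaternion ℝ → V →L[ℝ] V)
    (hRf : ∀ s ∈ rhoSB T (D : Set V) (Bc : Set V),
      IsInvQ T (D : Set V) (Bc : Set V) s (Rf s))
    (SL SR : Quaternion ℝ → V →L[ℝ] V)
    (hSL : ∀ s ∈ rhoSB T (D : Set V) (Bc : Set V), ∀ v : V,
      SL s v = Rf s (P.lm (star s) v) - T (Rf s v))
    (hSR : ∀ s ∈ rhoSB T (D : Set V) (Bc : Set V), ∀ v : V,
      SR s v = P.lm (star s) (Rf s v) - T (Rf s v)) :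
    ContDiffOn ℝ 1 SL (rhoSB T (D : Set V) (Bc : Set V)) ∧
      ContDiffOn ℝ 1 SR (rhoSB T (D : Set V) (Bc : Set V)) := by
  exact stmt8_general P 1 T D Bc Rf hRf SL SR hSL hSR
end

section
/- For (x,y) ∈ ρ_B(T) define the bounded operators f₀(x,y) := −T∘R_{x,y} + x·R_{x,y} and f₁(x,y) := −y·R_{x,y}. Then f₀ and f₁ are continuously differentiable on ρ_B(T) (values in the Banach space of bounded operators on V) and, writing R := R_{x,y} and TR := T∘R_{x,y}, their partial derivatives are: ∂f₀/∂x = −2(TR)∘(TR) + 2x(TR)∘R + 2xR∘(TR) − 2x²R∘R + R; ∂f₀/∂y = 2y(TR)∘R − 2xyR∘R; ∂f₁/∂x = −2yR∘(TR) + 2xyR∘R; ∂f₁/∂y = 2y²R∘R − R. -/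
/-
Fix `p ∈ ρ_B(T)` and let `R = R_p`. Every `u ∈ dom_B(T²)` equals `R w` with `w = Q_p u`, so `Q_q` is
governed by the bounded operator `Q_q ∘ R`, which is a polynomial in `q` with coefficients `1`, `R`
and `T ∘ R` and equals `1` at `q = p`. Near `p` it is therefore invertible, and
`R_q = R ∘ (Q_q ∘ R)⁻¹`, `T ∘ R_q = (T ∘ R) ∘ (Q_q ∘ R)⁻¹`. Smoothness and the derivatives follow
from those of inversion in a Banach algebra at `1`.
-/

open scoped Ring Topology

section RingInverse

variable {𝕜 E 𝔸 : Type*} [NontriviallyNormedField 𝕜] [NormedAddCommGroup E] [NormedSpace 𝕜 E]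
  [NormedRing 𝔸] [NormedAlgebra 𝕜 𝔸] [HasSummableGeomSeries 𝔸] {U : E → 𝔸} {p : E}

theorem contDiffAt_const_mul_ringInverse {n : WithTop ℕ∞} (a : 𝔸) (hp : IsUnit (U p))
    (hU : ContDiffAt 𝕜 n U p) : ContDiffAt 𝕜 n (fun q => a * (U q)⁻¹ʳ) p := by
  obtain ⟨u, hu⟩ := hp
  have hinv : ContDiffAt 𝕜 n Ring.inverse (U p) := hu ▸ contDiffAt_ringInverse 𝕜 u
  exact contDiffAt_const.mul (hinv.comp p hU)

theorem hasFDerivAt_const_mul_ringInverse_of_eq_one {U' : E →L[𝕜] 𝔸} (a : 𝔸) (hp : U p = 1)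
    (hU : HasFDerivAt U U' p) :
    HasFDerivAt (fun q => a * (U q)⁻¹ʳ) (-(ContinuousLinearMap.mul 𝕜 𝔸 a).comp U') p := by
  have hinv : HasFDerivAt Ring.inverse (-ContinuousLinearMap.mulLeftRight 𝕜 𝔸 1 1) (U p) := by
    simpa [hp] using hasFDerivAt_ringInverse (𝕜 := 𝕜) (1 : 𝔸ˣ)
  refine ((hinv.comp p hU).const_mul a).congr_fderiv ?_
  ext v
  simp

end RingInverse

section ProductRule

variable {M : Type*} [NormedAddCommGroup M] [NormedSpace ℝ M] {F G : ℝ × ℝ → M}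
  {Fx Fy Gx Gy : M} {p : ℝ × ℝ}

theorem hasFDerivAt_neg_add_fst_smul
    (hG : HasFDerivAt G ((ContinuousLinearMap.fst ℝ ℝ ℝ).smulRight Gx +
      (ContinuousLinearMap.snd ℝ ℝ ℝ).smulRight Gy) p)
    (hF : HasFDerivAt F ((ContinuousLinearMap.fst ℝ ℝ ℝ).smulRight Fx +
      (ContinuousLinearMap.snd ℝ ℝ ℝ).smulRight Fy) p) :
    HasFDerivAt (fun q => -(G q) + q.1 • F q)
      ((ContinuousLinearMap.fst ℝ ℝ ℝ).smulRight (-Gx + p.1 • Fx + F p) +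
        (ContinuousLinearMap.snd ℝ ℝ ℝ).smulRight (-Gy + p.1 • Fy)) p := by
  refine (hG.neg.add (hasFDerivAt_fst.smul hF)).congr_fderiv ?_
  ext <;> simp [add_assoc]

theorem hasFDerivAt_neg_snd_smul
    (hF : HasFDerivAt F ((ContinuousLinearMap.fst ℝ ℝ ℝ).smulRight Fx +
      (ContinuousLinearMap.snd ℝ ℝ ℝ).smulRight Fy) p) :
    HasFDerivAt (fun q => -(q.2 • F q))
      ((ContinuousLinearMap.fst ℝ ℝ ℝ).smulRight (-(p.2 • Fx)) +
        (ContinuousLinearMap.snd ℝ ℝ ℝ).smulRight (-(p.2 • Fy + F p))) p := by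
  refine (hasFDerivAt_snd.smul hF).neg.congr_fderiv ?_
  ext <;> simp [add_comm]

end ProductRule

section QMulResolvent

/-- The operator `Q_q ∘ R_p`, written in terms of `R = R_p` and `S = T ∘ R_p` only, which makes it
an element of the Banach algebra of bounded operators even though `Q_q` is unbounded. -/
noncomputable def qMulResolvent {A : Type*} [Ring A] [Module ℝ A] (p : ℝ × ℝ) (R S : A)
    (q : ℝ × ℝ) : A :=
  1 - (2 * (q.1 - p.1)) • S + (q.1 ^ 2 + q.2 ^ 2 - (p.1 ^ 2 + p.2 ^ 2)) • R

theorem qMulResolvent_self {A : Type*} [Ring A] [Module ℝ A] (p : ℝ × ℝ) (R S : A) :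
    qMulResolvent p R S p = 1 := by
  simp [qMulResolvent]

variable {𝔸 : Type*} [NormedRing 𝔸] [NormedAlgebra ℝ 𝔸]

theorem contDiff_qMulResolvent {n : WithTop ℕ∞} (p : ℝ × ℝ) (R S : 𝔸) :
    ContDiff ℝ n (qMulResolvent p R S) := by
  unfold qMulResolvent
  fun_prop

theorem hasFDerivAt_qMulResolvent (p : ℝ × ℝ) (R S : 𝔸) :
    HasFDerivAt (qMulResolvent p R S)
      ((ContinuousLinearMap.fst ℝ ℝ ℝ).smulRight ((2 * p.1) • R - (2 : ℝ) • S) +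
        (ContinuousLinearMap.snd ℝ ℝ ℝ).smulRight ((2 * p.2) • R)) p := by
  have hfst : HasFDerivAt Prod.fst (ContinuousLinearMap.fst ℝ ℝ ℝ) p := hasFDerivAt_fst
  have hsnd : HasFDerivAt Prod.snd (ContinuousLinearMap.snd ℝ ℝ ℝ) p := hasFDerivAt_snd
  have hS := (((hfst.sub_const p.1).const_mul 2).smul_const S).const_sub 1
  have hR := (((hfst.pow 2).add (hsnd.pow 2)).sub_const (p.1 ^ 2 + p.2 ^ 2)).smul_const R
  refine (hS.add hR).congr_fderiv ?_
  ext <;> simp [neg_add_eq_sub]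

variable [HasSummableGeomSeries 𝔸]

theorem eventually_isUnit_qMulResolvent (p : ℝ × ℝ) (R S : 𝔸) :
    ∀ᶠ q in 𝓝 p, IsUnit (qMulResolvent p R S q) := by
  have hcont : ContinuousAt (qMulResolvent p R S) p :=
    (contDiff_qMulResolvent (n := 0) p R S).continuous.continuousAt
  exact hcont.eventually (Units.isOpen.mem_nhds (by simp [qMulResolvent_self]))

theorem contDiffAt_mul_inverse_qMulResolvent {n : WithTop ℕ∞} (p : ℝ × ℝ) (a R S : 𝔸) :
    ContDiffAt ℝ n (fun q => a * (qMulResolvent p R S q)⁻¹ʳ) p :=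
  contDiffAt_const_mul_ringInverse a (by simp [qMulResolvent_self])
    (contDiff_qMulResolvent p R S).contDiffAt

theorem hasFDerivAt_mul_inverse_qMulResolvent (p : ℝ × ℝ) (a R S : 𝔸) :
    HasFDerivAt (fun q => a * (qMulResolvent p R S q)⁻¹ʳ)
      ((ContinuousLinearMap.fst ℝ ℝ ℝ).smulRight ((2 : ℝ) • (a * S) - (2 * p.1) • (a * R)) +
        (ContinuousLinearMap.snd ℝ ℝ ℝ).smulRight (-(2 * p.2) • (a * R))) p := by
  refine (hasFDerivAt_const_mul_ringInverse_of_eq_one a (qMulResolvent_self p R S)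
    (hasFDerivAt_qMulResolvent p R S)).congr_fderiv ?_
  ext <;> simp [mul_sub]

end QMulResolvent

section Resolvent

variable {V : Type*} [NormedAddCommGroup V] [NormedSpace ℝ V] {T : V → V} {D Bc : Set V}
  {p q : ℝ × ℝ} {R R' S : V →L[ℝ] V}

theorem IsInv.unique_s10 {x y : ℝ} (hR : IsInv T D Bc x y R) (hR' : IsInv T D Bc x y R') :
    R = R' := by
  ext v
  rw [← hR'.2.2 (R v) (hR.1 v), hR.2.1]

theorem IsInv.qMulResolvent_apply (hR : IsInv T D Bc p.1 p.2 R) (hS : ∀ v, S v = T (R v))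
    (v : V) : qMulResolvent p R S q v = Qop T q.1 q.2 (R v) := by
  have hv : T (T (R v)) - (2 * p.1) • T (R v) + (p.1 ^ 2 + p.2 ^ 2) • R v = v := hR.2.1 v
  simp only [qMulResolvent, Qop, sub_apply, add_apply, smul_apply, one_apply_eq_self, hS]
  nth_rewrite 1 [← hv]
  module

theorem IsInv.mul_inverse_qMulResolvent (hR : IsInv T D Bc p.1 p.2 R)
    (hS : ∀ v, S v = T (R v)) (hU : IsUnit (qMulResolvent p R S q)) :
    IsInv T D Bc q.1 q.2 (R * (qMulResolvent p R S q)⁻¹ʳ) := by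
  refine ⟨fun v => hR.1 _, fun v => ?_, fun u hu => ?_⟩
  · rw [mul_apply_eq_comp, ← hR.qMulResolvent_apply hS, ← mul_apply_eq_comp,
      Ring.mul_inverse_cancel _ hU, one_apply_eq_self]
  · obtain ⟨w, rfl⟩ : ∃ w, R w = u := ⟨Qop T p.1 p.2 u, hR.2.2 u hu⟩
    rw [← hR.qMulResolvent_apply hS, ← mul_apply_eq_comp, Ring.inverse_mul_cancel_right _ _ hU]

variable [CompleteSpace V] {Rf TRf : ℝ × ℝ → V →L[ℝ] V}

theorem IsInv.rhoB_mem_nhds_s10 (hR : IsInv T D Bc p.1 p.2 R) (hS : ∀ v, S v = T (R v)) :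
    rhoB T D Bc ∈ 𝓝 p := by
  filter_upwards [eventually_isUnit_qMulResolvent p R S] with q hU
  exact ⟨_, hR.mul_inverse_qMulResolvent hS hU⟩

theorem resolvent_eventuallyEq (hp : p ∈ rhoB T D Bc)
    (hRf : ∀ q ∈ rhoB T D Bc, IsInv T D Bc q.1 q.2 (Rf q)) (hS : ∀ v, S v = T (Rf p v)) :
    Rf =ᶠ[𝓝 p] fun q => Rf p * (qMulResolvent p (Rf p) S q)⁻¹ʳ := by
  filter_upwards [(hRf p hp).rhoB_mem_nhds_s10 hS, eventually_isUnit_qMulResolvent p (Rf p) S]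
    with q hq hU
  exact (hRf q hq).unique_s10 ((hRf p hp).mul_inverse_qMulResolvent hS hU)

theorem comp_resolvent_eventuallyEq (hp : p ∈ rhoB T D Bc)
    (hRf : ∀ q ∈ rhoB T D Bc, IsInv T D Bc q.1 q.2 (Rf q))
    (hTRf : ∀ q ∈ rhoB T D Bc, ∀ v, TRf q v = T (Rf q v)) :
    TRf =ᶠ[𝓝 p] fun q => TRf p * (qMulResolvent p (Rf p) (TRf p) q)⁻¹ʳ := by
  have hS := hTRf p hp
  filter_upwards [(hRf p hp).rhoB_mem_nhds_s10 hS, resolvent_eventuallyEq hp hRf hS] with q hq hRq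
  ext v
  rw [hTRf q hq, hRq, mul_apply_eq_comp, mul_apply_eq_comp, hS]

end Resolvent

theorem stmt10_general {V : Type*} [NormedAddCommGroup V] [NormedSpace ℝ V] [CompleteSpace V]
    {n : WithTop ℕ∞} {T : V → V} {D Bc : Set V} {Rf TRf : ℝ × ℝ → V →L[ℝ] V}
    (hRf : ∀ p ∈ rhoB T D Bc, IsInv T D Bc p.1 p.2 (Rf p))
    (hTRf : ∀ p ∈ rhoB T D Bc, ∀ v : V, TRf p v = T (Rf p v)) :
    ContDiffOn ℝ n (fun p : ℝ × ℝ => -(TRf p) + p.1 • Rf p)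
        (rhoB T D Bc) ∧
      ContDiffOn ℝ n (fun p : ℝ × ℝ => -(p.2 • Rf p))
        (rhoB T D Bc) ∧
      ∀ p ∈ rhoB T D Bc,
        HasFDerivAt (fun p : ℝ × ℝ => -(TRf p) + p.1 • Rf p)
          ((ContinuousLinearMap.fst ℝ ℝ ℝ).smulRight
              ((-(2 : ℝ)) • ((TRf p).comp (TRf p)) + (2 * p.1) • ((TRf p).comp (Rf p))
                + (2 * p.1) • ((Rf p).comp (TRf p))
                - (2 * p.1 ^ 2) • ((Rf p).comp (Rf p)) + Rf p) +
            (ContinuousLinearMap.snd ℝ ℝ ℝ).smulRight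
              ((2 * p.2) • ((TRf p).comp (Rf p))
                - (2 * p.1 * p.2) • ((Rf p).comp (Rf p)))) p ∧
        HasFDerivAt (fun p : ℝ × ℝ => -(p.2 • Rf p))
          ((ContinuousLinearMap.fst ℝ ℝ ℝ).smulRight
              ((-(2 * p.2)) • ((Rf p).comp (TRf p))
                + (2 * p.1 * p.2) • ((Rf p).comp (Rf p))) +
            (ContinuousLinearMap.snd ℝ ℝ ℝ).smulRight
              ((2 * p.2 ^ 2) • ((Rf p).comp (Rf p)) - Rf p)) p := by
  have hR := fun p hp => resolvent_eventuallyEq hp hRf (hTRf p hp)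
  have hTR := fun p hp => comp_resolvent_eventuallyEq (p := p) hp hRf hTRf
  have hRsmooth : ∀ p ∈ rhoB T D Bc, ContDiffAt ℝ n Rf p := fun p hp =>
    (contDiffAt_mul_inverse_qMulResolvent p _ _ _).congr_of_eventuallyEq (hR p hp)
  have hTRsmooth : ∀ p ∈ rhoB T D Bc, ContDiffAt ℝ n TRf p := fun p hp =>
    (contDiffAt_mul_inverse_qMulResolvent p _ _ _).congr_of_eventuallyEq (hTR p hp)
  refine ⟨fun p hp => ?_, fun p hp => ?_, fun p hp => ?_⟩
  · exact ((hTRsmooth p hp).neg.add (contDiffAt_fst.smul (hRsmooth p hp))).contDiffWithinAt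
  · exact (contDiffAt_snd.smul (hRsmooth p hp)).neg.contDiffWithinAt
  · have hdR := (hasFDerivAt_mul_inverse_qMulResolvent p _ _ _).congr_of_eventuallyEq (hR p hp)
    have hdTR := (hasFDerivAt_mul_inverse_qMulResolvent p _ _ _).congr_of_eventuallyEq (hTR p hp)
    constructor
    · refine (hasFDerivAt_neg_add_fst_smul hdTR hdR).congr_fderiv ?_
      congr 2 <;> simp only [← ContinuousLinearMap.mul_def] <;> module
    · refine (hasFDerivAt_neg_snd_smul hdR).congr_fderiv ?_
      congr 2 <;> simp only [← ContinuousLinearMap.mul_def] <;> module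

/-- the slice components `f₀(x,y) = −T∘R + xR`, `f₁(x,y) = −yR` of the
`S`-resolvent operators are continuously differentiable on `ρ_B(T)` with the indicated
partial derivatives. -/
theorem stmt10 {V : Type*} [NormedAddCommGroup V] [NormedSpace ℝ V] [CompleteSpace V]
    (T : V → V) (D Bc : Submodule ℝ V) (hBD : (Bc : Set V) ⊆ (D : Set V))
    (hTadd : ∀ u ∈ D, ∀ v ∈ D, T (u + v) = T u + T v)
    (hTsmul : ∀ (c : ℝ), ∀ u ∈ D, T (c • u) = c • T u)
    (hTclosed : IsClosed {p : V × V | p.1 ∈ D ∧ p.2 = T p.1})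
    (hopen : IsOpen (rhoB T (D : Set V) (Bc : Set V)))
    (Rf TRf : ℝ × ℝ → V →L[ℝ] V)
    (hRf : ∀ p ∈ rhoB T (D : Set V) (Bc : Set V),
      IsInv T (D : Set V) (Bc : Set V) p.1 p.2 (Rf p))
    (hTRf : ∀ p ∈ rhoB T (D : Set V) (Bc : Set V), ∀ v : V, TRf p v = T (Rf p v)) :
    ContDiffOn ℝ 1 (fun p : ℝ × ℝ => -(TRf p) + p.1 • Rf p)
        (rhoB T (D : Set V) (Bc : Set V)) ∧
      ContDiffOn ℝ 1 (fun p : ℝ × ℝ => -(p.2 • Rf p))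
        (rhoB T (D : Set V) (Bc : Set V)) ∧
      ∀ p ∈ rhoB T (D : Set V) (Bc : Set V),
        HasFDerivAt (fun p : ℝ × ℝ => -(TRf p) + p.1 • Rf p)
          ((ContinuousLinearMap.fst ℝ ℝ ℝ).smulRight
              ((-(2 : ℝ)) • ((TRf p).comp (TRf p)) + (2 * p.1) • ((TRf p).comp (Rf p))
                + (2 * p.1) • ((Rf p).comp (TRf p))
                - (2 * p.1 ^ 2) • ((Rf p).comp (Rf p)) + Rf p) +
            (ContinuousLinearMap.snd ℝ ℝ ℝ).smulRight
              ((2 * p.2) • ((TRf p).comp (Rf p))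
                - (2 * p.1 * p.2) • ((Rf p).comp (Rf p)))) p ∧
        HasFDerivAt (fun p : ℝ × ℝ => -(p.2 • Rf p))
          ((ContinuousLinearMap.fst ℝ ℝ ℝ).smulRight
              ((-(2 * p.2)) • ((Rf p).comp (TRf p))
                + (2 * p.1 * p.2) • ((Rf p).comp (Rf p))) +
            (ContinuousLinearMap.snd ℝ ℝ ℝ).smulRight
              ((2 * p.2 ^ 2) • ((Rf p).comp (Rf p)) - Rf p)) p :=
  stmt10_general hRf hTRf
end

section
/- Let (x,0) ∈ ρ_B(T), write R := R_{x,0}, and let v ∈ V. If the Cauchy–Riemann identity −T(R(T(Rv))) + x·T(R(Rv)) + x·R(T(Rv)) + Rv − x²·R(Rv) = 0 holds at v, then the vector w := T(R(Rv)) − R(T(Rv)) satisfies Tw = x·w. -/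
/-!
Write `w = [T, R] R v`. Expanding `T w = T² R R v - T R T R v` and eliminating `T²` by means of
`Q R R v = R v` leaves exactly `x w` plus the left-hand side of the Cauchy–Riemann identity at `v`.
Hence that identity holds at `v` if and only if `T w = x w`, for every `y`.
-/

theorem map_sub_of_map_add_on {G H : Type*} [AddGroup G] [AddGroup H] {D : AddSubgroup G}
    {f : G → H} (hadd : ∀ u ∈ D, ∀ v ∈ D, f (u + v) = f u + f v)
    {u v : G} (hu : u ∈ D) (hv : v ∈ D) : f (u - v) = f u - f v :=
  map_sub (AddMonoidHom.mk' (fun u : D ↦ f u) fun u v ↦ hadd u u.2 v v.2) ⟨u, hu⟩ ⟨v, hv⟩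

section Resolvent

variable {V : Type*} [AddCommGroup V]

/-- The commutator `[T, R] = T R - R T`, as a map on vectors; it measures by how much the inverse
`R` of `Q_{x,y}` fails to commute with `T`. As `T` is a total function here, the value at `u` is
meaningful only if `u` and `R u` lie in the domain of `T`. -/
def resolventCommutator (T R : V → V) (u : V) : V := T (R u) - R (T u)

variable [Module ℝ V]

/-- The left-hand side, evaluated at `v`, of the first Cauchy–Riemann equation for the left
S-resolvent `α + β I` with `α = x R - T R` and `β = -y R`. It is `(∂ₓα - ∂ᵧβ) v / 2` with the
derivatives `∂ₓR = 2 R (T - x) R` and `∂ᵧR = -2 y R²` already inserted. -/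
def cauchyRiemannDefect (T R : V → V) (x y : ℝ) (v : V) : V :=
  -T (R (T (R v))) + x • T (R (R v)) + x • R (T (R v)) + R v - (x ^ 2 + y ^ 2) • R (R v)

theorem Qop_eq_iff {T : V → V} {x y : ℝ} {u f : V} :
    Qop T x y u = f ↔ T (T u) = f + (2 * x) • T u - (x ^ 2 + y ^ 2) • u := by
  rw [Qop, ← eq_sub_iff_add_eq, sub_eq_iff_eq_add, sub_add_eq_add_sub]

variable {T R : V → V} {D : AddSubgroup V} {x y : ℝ}

theorem apply_resolventCommutator_sub_smul
    (hadd : ∀ u ∈ D, ∀ v ∈ D, T (u + v) = T u + T v)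
    (hdom : ∀ u, R u ∈ dom2 T D) (hQ : Function.RightInverse R (Qop T x y)) (v : V) :
    T (resolventCommutator T R (R v)) - x • resolventCommutator T R (R v) =
      cauchyRiemannDefect T R x y v := by
  have hsub : T (resolventCommutator T R (R v)) = T (T (R (R v))) - T (R (T (R v))) :=
    map_sub_of_map_add_on hadd (hdom (R v)).2 (hdom (T (R v))).1
  have hsq : T (T (R (R v))) = R v + (2 * x) • T (R (R v)) - (x ^ 2 + y ^ 2) • R (R v) :=
    Qop_eq_iff.mp (hQ (R v))
  rw [hsub, hsq, resolventCommutator, cauchyRiemannDefect]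
  module

theorem stmt14_general
    (hadd : ∀ u ∈ D, ∀ v ∈ D, T (u + v) = T u + T v)
    (hdom : ∀ u, R u ∈ dom2 T D) (hQ : Function.RightInverse R (Qop T x y)) (v : V) :
    cauchyRiemannDefect T R x y v = 0 ↔
      T (resolventCommutator T R (R v)) = x • resolventCommutator T R (R v) := by
  rw [← apply_resolventCommutator_sub_smul hadd hdom hQ, sub_eq_zero]

end Resolvent

/-- necessity, real case `y = 0`: the first Cauchy–Riemann identity at `v` implies
that `w = [T, R_{x,0}] (R_{x,0} v)` is an eigenvector (possibly zero) of `T` for `x`. -/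
theorem stmt14 {V : Type*} [NormedAddCommGroup V] [NormedSpace ℝ V] [CompleteSpace V]
    (T : V → V) (D Bc : Submodule ℝ V) (hBD : (Bc : Set V) ⊆ (D : Set V))
    (hTadd : ∀ u ∈ D, ∀ v ∈ D, T (u + v) = T u + T v)
    (hTsmul : ∀ (c : ℝ), ∀ u ∈ D, T (c • u) = c • T u)
    (hTclosed : IsClosed {p : V × V | p.1 ∈ D ∧ p.2 = T p.1})
    (x : ℝ) (R : V →L[ℝ] V)
    (hR : IsInv T (D : Set V) (Bc : Set V) x 0 R)
    (v : V)
    (hCR1 : -(T (R (T (R v)))) + x • T (R (R v)) + x • R (T (R v)) + R v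
        - x ^ 2 • R (R v) = 0) :
    T (T (R (R v)) - R (T (R v))) = x • (T (R (R v)) - R (T (R v))) :=
  (stmt14_general (D := D.toAddSubgroup) hTadd (fun u ↦ (hR.1 u).1) hR.2.1 v).mp <| by
    simpa [cauchyRiemannDefect] using hCR1
end

section
/- Suppose dom(T²) ⊆ B ⊆ dom(T). Then for every (x,y) ∈ ρ_B(T) and every v ∈ V, writing R := R_{x,y}, both Cauchy–Riemann identities hold at v: T(R(Rv)) = R(T(Rv)) and −T(R(T(Rv))) + x·T(R(Rv)) + x·R(T(Rv)) + Rv − (x²+y²)·R(Rv) = 0. -/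
/-!
Since `dom (T²) ⊆ B`, the operator `Q` has domain `dom (T²)`. If `Q u ∈ dom T`, solving `Q u` for
`T² u` shows `u ∈ dom (T³)`, where `T` and `Q` commute. Hence `R` commutes with `T` on `dom T`. As
`R v ∈ dom T`, this is the first identity, and it turns the second into `Q (R (R v)) = R v`.
-/

open Set

/-- Linearity of a function on a submodule `D`: with `D = dom T`, this makes an everywhere-defined
`T` (with junk values off `D`) represent an unbounded linear operator. -/
structure IsLinearOn {𝕜 V W : Type*} [Semiring 𝕜] [AddCommMonoid V] [AddCommMonoid W] [Module 𝕜 V]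
    [Module 𝕜 W] (T : V → W) (D : Submodule 𝕜 V) : Prop where
  map_add : ∀ u ∈ D, ∀ v ∈ D, T (u + v) = T u + T v
  map_smul : ∀ (c : 𝕜), ∀ u ∈ D, T (c • u) = c • T u

theorem IsLinearOn.map_sub {𝕜 V W : Type*} [Ring 𝕜] [AddCommGroup V] [AddCommGroup W] [Module 𝕜 V]
    [Module 𝕜 W] {T : V → W} {D : Submodule 𝕜 V} (hT : IsLinearOn T D) {u v : V} (hu : u ∈ D)
    (hv : v ∈ D) : T (u - v) = T u - T v := by
  have hsum : T (u - v + v) = T (u - v) + T v := hT.map_add _ (D.sub_mem hu hv) _ hv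
  rw [eq_sub_iff_add_eq, ← hsum, sub_add_cancel]

theorem domB2_eq_dom2 {V : Type*} {T : V → V} {D B : Set V} (hB : dom2 T D ⊆ B) :
    domB2 T D B = dom2 T D :=
  inter_eq_left.mpr hB

section Qop

variable {V : Type*} [AddCommGroup V] [Module ℝ V] {T R : V → V} {D : Submodule ℝ V} {x y : ℝ}

theorem mem_dom3_of_Qop_mem {u : V} (hu : u ∈ dom2 T D) (hQu : Qop T x y u ∈ D) :
    u ∈ dom3 T D := by
  have hTTu : T (T u) = Qop T x y u + (2 * x) • T u - (x ^ 2 + y ^ 2) • u := by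
    unfold Qop
    module
  refine ⟨hu, hu.2, ?_⟩
  rw [hTTu]
  exact D.sub_mem (D.add_mem hQu (D.smul_mem _ hu.2)) (D.smul_mem _ hu.1)

theorem IsLinearOn.map_Qop (hT : IsLinearOn T D) {u : V} (hu : u ∈ dom3 T D) :
    T (Qop T x y u) = Qop T x y (T u) := by
  obtain ⟨⟨hu₀, hu₁⟩, -, hu₂⟩ := hu
  have hsmul₁ : (2 * x) • T u ∈ D := D.smul_mem _ hu₁
  have hsmul₀ : (x ^ 2 + y ^ 2) • u ∈ D := D.smul_mem _ hu₀
  unfold Qop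
  rw [hT.map_add _ (D.sub_mem hu₂ hsmul₁) _ hsmul₀, hT.map_sub hu₂ hsmul₁,
    hT.map_smul _ _ hu₁, hT.map_smul _ _ hu₀]

theorem IsLinearOn.map_comm_of_invOn_Qop (hT : IsLinearOn T D)
    (hmaps : MapsTo R D (dom2 T D)) (hinv : InvOn R (Qop T x y) (dom2 T D) D) {w : V}
    (hw : w ∈ D) : T (R w) = R (T w) := by
  have hQR : Qop T x y (R w) = w := hinv.2 hw
  have hRw : R w ∈ dom3 T D := mem_dom3_of_Qop_mem (hmaps hw) (hQR.symm ▸ hw)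
  calc
    T (R w) = R (Qop T x y (T (R w))) := (hinv.1 hRw.2).symm
    _ = R (T (Qop T x y (R w))) := by rw [hT.map_Qop hRw]
    _ = R (T w) := by rw [hQR]

theorem stmt15_general {B : Set V} (hT : IsLinearOn T D) (hB : dom2 T D ⊆ B)
    (hmaps : MapsTo R univ (domB2 T D B)) (hinv : InvOn R (Qop T x y) (domB2 T D B) univ)
    (v : V) :
    T (R (R v)) = R (T (R v)) ∧
      -(T (R (T (R v)))) + x • T (R (R v)) + x • R (T (R v)) + R v
        - (x ^ 2 + y ^ 2) • R (R v) = 0 := by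
  rw [domB2_eq_dom2 hB] at hmaps hinv
  have hRv : R v ∈ D := (hmaps (mem_univ v)).1
  have hcomm : T (R (R v)) = R (T (R v)) :=
    hT.map_comm_of_invOn_Qop (hmaps.mono_left (subset_univ _))
      (hinv.mono Subset.rfl (subset_univ _)) hRv
  have hQ : T (T (R (R v))) - (2 * x) • T (R (R v)) + (x ^ 2 + y ^ 2) • R (R v) = R v :=
    hinv.2 (mem_univ (R v))
  refine ⟨hcomm, ?_⟩
  rw [← hcomm]
  linear_combination (norm := module) (-1 : ℝ) • hQ

end Qop

/-- if `dom(T²) ⊆ B ⊆ dom(T)`, the Cauchy–Riemann identities hold at every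
`v ∈ V`, for every `(x,y) ∈ ρ_B(T)` (with `R = R_{x,y}` the corresponding inverse). -/
theorem stmt15 {V : Type*} [NormedAddCommGroup V] [NormedSpace ℝ V] [CompleteSpace V]
    (T : V → V) (D Bc : Submodule ℝ V) (hBD : (Bc : Set V) ⊆ (D : Set V))
    (hD2B : dom2 T (D : Set V) ⊆ (Bc : Set V))
    (hTadd : ∀ u ∈ D, ∀ v ∈ D, T (u + v) = T u + T v)
    (hTsmul : ∀ (c : ℝ), ∀ u ∈ D, T (c • u) = c • T u)
    (hTclosed : IsClosed {p : V × V | p.1 ∈ D ∧ p.2 = T p.1}) :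
    ∀ (x y : ℝ) (R : V →L[ℝ] V), IsInv T (D : Set V) (Bc : Set V) x y R →
      ∀ v : V,
        T (R (R v)) = R (T (R v)) ∧
          -(T (R (T (R v)))) + x • T (R (R v)) + x • R (T (R v)) + R v
            - (x ^ 2 + y ^ 2) • R (R v) = 0 := by
  rintro x y R ⟨hmem, hright, hleft⟩
  exact stmt15_general ⟨hTadd, hTsmul⟩ hD2B (fun w _ => hmem w) ⟨hleft, fun w _ => hright w⟩
end

section
/- (Left S-resolvent equation.) For every s ∈ ρ_{S,B}(T) and every v ∈ V one has S_{L,B}^{-1}(s,T)(s·v) − T(S_{L,B}^{-1}(s,T)v) = v. -/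
theorem map_sub_of_map_add_of_mem {G H σ : Type*} [AddGroup G] [AddGroup H] [SetLike σ G]
    [AddSubgroupClass σ G] {D : σ} {f : G → H}
    (hf : ∀ u ∈ D, ∀ v ∈ D, f (u + v) = f u + f v) {u v : G} (hu : u ∈ D) (hv : v ∈ D) :
    f (u - v) = f u - f v := by
  rw [eq_sub_iff_add_eq, ← hf _ (sub_mem hu hv) _ hv, sub_add_cancel]

namespace QuatBimodule

variable {V : Type*} [NormedAddCommGroup V] [NormedSpace ℝ V] (P : QuatBimodule V)

theorem lm_add_lm_star (s : Quaternion ℝ) (v : V) :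
    P.lm s v + P.lm (star s) v = (2 * s.re) • v := by
  rw [← P.lm_add, Quaternion.self_add_star', P.lm_real]

theorem lm_star_lm (s : Quaternion ℝ) (v : V) :
    P.lm (star s) (P.lm s v) = (‖s‖ ^ 2) • v := by
  rw [← P.lm_mul, Quaternion.star_mul_self, P.lm_real, Quaternion.normSq_eq_norm_mul_self, sq]

end QuatBimodule

/-- The left `S`-resolvent operator `v ↦ R(s̄·v) − T(Rv)`. The inverse `R` of `Q_{s,B}[T]` and the
left multiplication `conj` by `s̄` are arguments, so that the operator makes sense without a
quaternionic structure. -/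
def leftSResolvent {V : Type*} [Sub V] (T R conj : V → V) (v : V) : V :=
  R (conj v) - T (R v)

theorem map_leftSResolvent {V σ : Type*} [AddGroup V] [SetLike σ V] [AddSubgroupClass σ V]
    {D : σ} {T R : V → V} (hTadd : ∀ u ∈ D, ∀ v ∈ D, T (u + v) = T u + T v)
    (hR : ∀ v, R v ∈ dom2 T (D : Set V)) (conj : V → V) (v : V) :
    T (leftSResolvent T R conj v) = T (R (conj v)) - T (T (R v)) :=
  map_sub_of_map_add_of_mem hTadd (hR (conj v)).1 (hR v).2

section Quadratic

-- Over `ℍ`: `mul`, `conj` are left multiplication by `s` and `s̄`; `t = 2 Re s`, `n = |s|²`.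
variable {K V : Type*} [Ring K] [AddCommGroup V] [Module K V]
  {T : V → V} {D : Submodule K V} {R : V →ₗ[K] V} {mul conj : V → V} {t n : K}

theorem map_apply_mul_add_map_apply_conj (hTadd : ∀ u ∈ D, ∀ v ∈ D, T (u + v) = T u + T v)
    (hTsmul : ∀ c : K, ∀ u ∈ D, T (c • u) = c • T u) (hRD : ∀ v, R v ∈ D)
    (htrace : ∀ v, mul v + conj v = t • v) (v : V) :
    T (R (mul v)) + T (R (conj v)) = t • T (R v) := by
  rw [← hTadd _ (hRD _) _ (hRD _), ← map_add, htrace, map_smul, hTsmul _ _ (hRD v)]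

theorem leftSResolvent_mul_sub_map_leftSResolvent
    (hTadd : ∀ u ∈ D, ∀ v ∈ D, T (u + v) = T u + T v)
    (hTsmul : ∀ c : K, ∀ u ∈ D, T (c • u) = c • T u)
    (hR : ∀ v, R v ∈ dom2 T (D : Set V))
    (htrace : ∀ v, mul v + conj v = t • v) (hnorm : ∀ v, conj (mul v) = n • v) (v : V) :
    leftSResolvent T R conj (mul v) - T (leftSResolvent T R conj v) =
      T (T (R v)) - t • T (R v) + n • R v := by
  have resolvent_mul : leftSResolvent T R conj (mul v) = n • R v - T (R (mul v)) := by
    rw [leftSResolvent, hnorm, map_smul]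
  calc leftSResolvent T R conj (mul v) - T (leftSResolvent T R conj v)
      = (n • R v - T (R (mul v))) - (T (R (conj v)) - T (T (R v))) := by
        rw [resolvent_mul, map_leftSResolvent hTadd hR]
    _ = T (T (R v)) - (T (R (mul v)) + T (R (conj v))) + n • R v := by abel
    _ = T (T (R v)) - t • T (R v) + n • R v := by
        rw [map_apply_mul_add_map_apply_conj hTadd hTsmul (fun w => (hR w).1) htrace]

theorem stmt17_general (hTadd : ∀ u ∈ D, ∀ v ∈ D, T (u + v) = T u + T v)
    (hTsmul : ∀ c : K, ∀ u ∈ D, T (c • u) = c • T u)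
    (hR : ∀ v, R v ∈ dom2 T (D : Set V))
    (hQR : ∀ v, T (T (R v)) - t • T (R v) + n • R v = v)
    (htrace : ∀ v, mul v + conj v = t • v) (hnorm : ∀ v, conj (mul v) = n • v) (v : V) :
    leftSResolvent T R conj (mul v) - T (leftSResolvent T R conj v) = v :=
  (leftSResolvent_mul_sub_map_leftSResolvent hTadd hTsmul hR htrace hnorm v).trans (hQR v)

end Quadratic

/-- left `S`-resolvent equation: for `s ∈ ρ_{S,B}(T)` with inverse
`R = Q_{s,B}[T]⁻¹`, and `S_{L,B}^{-1}(s,T)v = R(s̄·v) − T(Rv)`, one has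
`S_{L,B}^{-1}(s,T)(s·v) − T(S_{L,B}^{-1}(s,T)v) = v` for all `v ∈ V`. -/
theorem stmt17 {V : Type*} [NormedAddCommGroup V] [NormedSpace ℝ V] [CompleteSpace V]
    (P : QuatBimodule V) (T : V → V) (D Bc : Submodule ℝ V)
    (hBD : (Bc : Set V) ⊆ (D : Set V))
    (hDrm : ∀ (a : Quaternion ℝ), ∀ v ∈ D, P.rm a v ∈ D)
    (hBrm : ∀ (a : Quaternion ℝ), ∀ v ∈ Bc, P.rm a v ∈ Bc)
    (hTadd : ∀ u ∈ D, ∀ v ∈ D, T (u + v) = T u + T v)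
    (hTsmul : ∀ (c : ℝ), ∀ u ∈ D, T (c • u) = c • T u)
    (hTrm : ∀ (a : Quaternion ℝ), ∀ u ∈ D, T (P.rm a u) = P.rm a (T u))
    (hTclosed : IsClosed {p : V × V | p.1 ∈ D ∧ p.2 = T p.1})
    (s : Quaternion ℝ) (R : V →L[ℝ] V)
    (hR : IsInvQ T (D : Set V) (Bc : Set V) s R) :
    ∀ v : V,
      (R (P.lm (star s) (P.lm s v)) - T (R (P.lm s v)))
          - T (R (P.lm (star s) v) - T (R v)) = v :=
  stmt17_general (R := R.toLinearMap) hTadd hTsmul (fun v => (hR.1 v).1) hR.2.1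
    (P.lm_add_lm_star s) (P.lm_star_lm s)
end
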